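/- Let X be a coded shift with unique representation G = {g_1, g_2, …}. If φ ∈ FSSP(X), then P_top(X,φ) = lim_{m→∞} P_top(X_m, φ|_{X_m}). -/

import Mathlib

open Filter MeasureTheory Topology
open scoped BigOperators ENNReal

noncomputable section

namespace PaperStmt

/-- The full two-sided shift: bi-infinite sequences over the alphabet `Fin d`. -/
abbrev FullShift (d : ℕ) := ℤ → Fin d

/-- The (left) shift map `f(x)_k = x_{k+1}`. -/
def shift (d : ℕ) : FullShift d → FullShift d := fun x k => x (k + 1)

/-- A (two-sided) shift space: a nonempty closed shift-invariant subset. -/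
def IsShiftSpace {d : ℕ} (X : Set (FullShift d)) : Prop :=
  X.Nonempty ∧ IsClosed X ∧ shift d '' X = X

/-- The cylinder at position `0` determined by a word `w` of length `n`. -/
def cyl {d n : ℕ} (w : Fin n → Fin d) : Set (FullShift d) :=
  {x | ∀ i : Fin n, x ((i : ℕ) : ℤ) = w i}

/-- The language of `X` in length `n`: words of length `n` occurring in elements of `X`
(at position `0`; for shift-invariant `X` this is occurrence anywhere). -/
def langSet {d : ℕ} (X : Set (FullShift d)) (n : ℕ) : Set (Fin n → Fin d) :=
  {w | (X ∩ cyl w).Nonempty}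

/-- Birkhoff sum `S_n φ`. -/
def birkhoff {d : ℕ} (φ : FullShift d → ℝ) (n : ℕ) (x : FullShift d) : ℝ :=
  ∑ k ∈ Finset.range n, φ ((shift d)^[k] x)

open Classical in
/-- The `n`-th partition function `Z_n(φ)` of `X`. -/
def Zfun {d : ℕ} (X : Set (FullShift d)) (φ : FullShift d → ℝ) (n : ℕ) : ℝ :=
  ∑ w : Fin n → Fin d,
    if (X ∩ cyl w).Nonempty then Real.exp (sSup (birkhoff φ n '' (X ∩ cyl w))) else 0

/-- Topological pressure `P_top(X,φ) = lim (1/n) log Z_n(φ) = inf_n (1/n) log Z_n(φ)`. -/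
def pressure {d : ℕ} (X : Set (FullShift d)) (φ : FullShift d → ℝ) : ℝ :=
  ⨅ n : ℕ, (1 / (n + 1 : ℝ)) * Real.log (Zfun X φ (n + 1))

/-- Topological entropy `h_top(X) = inf_n (1/n) log |L(X,n)|`. -/
def entTop {d : ℕ} (X : Set (FullShift d)) : ℝ :=
  ⨅ n : ℕ, (1 / (n + 1 : ℝ)) * Real.log ((langSet X (n + 1)).ncard : ℝ)

/-- The shift-invariant Borel probability measures giving `X` full measure. -/
def InvProb {d : ℕ} (X : Set (FullShift d)) : Set (Measure (FullShift d)) :=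
  {μ | IsProbabilityMeasure μ ∧ μ.map (shift d) = μ ∧ μ X = 1}

/-- Measure-theoretic (Kolmogorov–Sinai) entropy of an invariant measure,
computed via cylinder sets: `h_μ = lim -(1/n) Σ_{|w|=n} μ[w] log μ[w]`. -/
def mEnt {d : ℕ} (μ : Measure (FullShift d)) : ℝ :=
  Filter.liminf
    (fun n : ℕ => (1 / (n + 1 : ℝ)) *
      ∑ w : Fin (n + 1) → Fin d, Real.negMulLog (μ (cyl w)).toReal)
    Filter.atTop

/-- The free energy `h_μ(f) + ∫ φ dμ` of an invariant measure. -/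
def freeEnergy {d : ℕ} (μ : Measure (FullShift d)) (φ : FullShift d → ℝ) : ℝ :=
  mEnt μ + ∫ x, φ x ∂μ

/-- `sup { ∫ φ dμ : μ ∈ M_X }`. -/
def intAvg {d : ℕ} (X : Set (FullShift d)) (φ : FullShift d → ℝ) : ℝ :=
  sSup {r | ∃ μ ∈ InvProb X, r = ∫ x, φ x ∂μ}

/-- `μ` is an equilibrium state of `φ` on `X`. -/
def IsEqState {d : ℕ} (X : Set (FullShift d)) (φ : FullShift d → ℝ)
    (μ : Measure (FullShift d)) : Prop :=
  μ ∈ InvProb X ∧ freeEnergy μ φ = pressure X φ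

/-- `p : ℤ → ℤ` parses `x` into consecutive generator blocks from `𝒢`:
the block of `x` from `p j` to `p (j+1) - 1` is a generator, for every `j`. -/
def IsParsing {d : ℕ} (𝒢 : Set (List (Fin d))) (x : FullShift d) (p : ℤ → ℤ) : Prop :=
  StrictMono p ∧ ∀ j : ℤ, ∃ g ∈ 𝒢,
    p (j + 1) = p j + g.length ∧ ∀ (l : ℕ) (hl : l < g.length), x (p j + l) = g[l]

/-- `X_seq`: the set of bi-infinite concatenations of generators. -/
def Xseq {d : ℕ} (𝒢 : Set (List (Fin d))) : Set (FullShift d) :=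
  {x | ∃ p : ℤ → ℤ, IsParsing 𝒢 x p}

/-- The coded shift generated by `𝒢`: the closure of `X_seq`. -/
def codedShift {d : ℕ} (𝒢 : Set (List (Fin d))) : Set (FullShift d) :=
  closure (Xseq 𝒢)

/-- `𝒢` is a unique representation: every `x ∈ X_seq` admits exactly one parsing
into generator blocks (i.e. the set of cut points is uniquely determined). -/
def UniqueRep {d : ℕ} (𝒢 : Set (List (Fin d))) : Prop :=
  ∀ (x : FullShift d) (p q : ℤ → ℤ),
    IsParsing 𝒢 x p → IsParsing 𝒢 x q → Set.range p = Set.range q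

/-- `P_seq(φ) = sup { h_μ + ∫φ dμ : μ ∈ M_X, μ(Xs) = 1 }`. -/
def PseqOf {d : ℕ} (X Xs : Set (FullShift d)) (φ : FullShift d → ℝ) : ℝ :=
  sSup {r | ∃ μ ∈ InvProb X, μ Xs = 1 ∧ r = freeEnergy μ φ}

/-- `P_lim(φ) = sup { h_μ + ∫φ dμ : μ ∈ M_X, μ(X \ Xs) = 1 }`. -/
def PlimOf {d : ℕ} (X Xs : Set (FullShift d)) (φ : FullShift d → ℝ) : ℝ :=
  sSup {r | ∃ μ ∈ InvProb X, μ (X \ Xs) = 1 ∧ r = freeEnergy μ φ}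

/-- `φ` has strict full sequential pressure: `P_seq(φ) > P_lim(φ)`. -/
def StrictFSP {d : ℕ} (X Xs : Set (FullShift d)) (φ : FullShift d → ℝ) : Prop :=
  PlimOf X Xs φ < PseqOf X Xs φ

/-- `φ ∈ FSSP(X)`: `φ` lies in the sup-norm closure (within `C(X,ℝ)`) of the
set of continuous potentials with strict full sequential pressure. -/
def InFSSP {d : ℕ} (X Xs : Set (FullShift d)) (φ : FullShift d → ℝ) : Prop :=
  ∀ ε : ℝ, 0 < ε → ∃ ψ : FullShift d → ℝ, ContinuousOn ψ X ∧
    (∀ x ∈ X, |φ x - ψ x| ≤ ε) ∧ StrictFSP X Xs ψ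

/-- The invariant probability measure equidistributed on the (period-`ℓ`) orbit of `y`. -/
def periodicMeasure {d : ℕ} (y : FullShift d) (ℓ : ℕ) : Measure (FullShift d) :=
  (ℓ : ℝ≥0∞)⁻¹ • ∑ k ∈ Finset.range ℓ, Measure.dirac ((shift d)^[k] y)

/-- `y` is periodic with period `ℓ ≥ 1`. -/
def IsPeriodicOf {d : ℕ} (y : FullShift d) (ℓ : ℕ) : Prop :=
  1 ≤ ℓ ∧ (shift d)^[ℓ] y = y

section Words

variable {d : ℕ}

/-- The finite set of words of length `n`. -/
def words (d n : ℕ) : Finset (List (Fin d)) :=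
  Finset.univ.image fun w : Fin n → Fin d => List.ofFn w

/-- The word of length `n` read off `x` from position `a` on. -/
def window (x : FullShift d) (a : ℤ) (n : ℕ) : List (Fin d) :=
  List.ofFn fun i : Fin n => x (a + i)

/-- The point reading the word `w` from position `0` on and `z` elsewhere. -/
def fillWord (z : Fin d) (w : List (Fin d)) : FullShift d :=
  fun i => if 0 ≤ i then w.getD i.toNat z else z

lemma mem_words {n : ℕ} {l : List (Fin d)} : l ∈ words d n ↔ l.length = n := by
  simp only [words, Finset.mem_image, Finset.mem_univ, true_and]
  constructor
  · rintro ⟨w, rfl⟩; simp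
  · rintro rfl; exact ⟨l.get, List.ofFn_get l⟩

lemma sum_words {M : Type*} [AddCommMonoid M] {n : ℕ} (F : List (Fin d) → M) :
    ∑ l ∈ words d n, F l = ∑ w : Fin n → Fin d, F (List.ofFn w) := by
  rw [words, Finset.sum_image]
  exact fun a _ b _ h => List.ofFn_injective h

lemma sum_words_add {M : Type*} [AddCommMonoid M] (k l : ℕ) (F : List (Fin d) → M) :
    ∑ w ∈ words d (k + l), F w = ∑ u ∈ words d k, ∑ v ∈ words d l, F (u ++ v) := by
  rw [← Finset.sum_product']
  refine (Finset.sum_bij' (fun p _ => p.1 ++ p.2) (fun w _ => (w.take k, w.drop k))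
    ?_ ?_ ?_ ?_ ?_).symm
  · simp +contextual [mem_words]
  · simp +contextual [mem_words]
  · rintro ⟨u, v⟩ h
    obtain ⟨h1, h2⟩ := Finset.mem_product.1 h
    rw [mem_words] at h1 h2
    simp [← h1]
  · simp
  · simp

@[simp] lemma length_window (x : FullShift d) (a : ℤ) (n : ℕ) : (window x a n).length = n := by
  simp [window]

lemma window_mem_words (x : FullShift d) (a : ℤ) (n : ℕ) : window x a n ∈ words d n := by
  simp [mem_words]

@[simp] lemma window_zero (x : FullShift d) (a : ℤ) : window x a 0 = [] := by simp [window]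

lemma window_add (x : FullShift d) (a : ℤ) (k l : ℕ) :
    window x a (k + l) = window x a k ++ window x (a + k) l := by
  simp [window, List.ofFn_add, add_assoc]

lemma shift_iterate (x : FullShift d) (k : ℕ) (i : ℤ) : (shift d)^[k] x i = x (i + k) := by
  induction k generalizing x with
  | zero => simp
  | succ k ih =>
    rw [Function.iterate_succ_apply, ih]
    simp only [shift]; congr 1; push_cast; ring

lemma window_shift (x : FullShift d) (k : ℕ) (a : ℤ) (n : ℕ) :
    window ((shift d)^[k] x) a n = window x (a + k) n := by
  simp only [window, shift_iterate]
  congr 1; ext i; congr 2; ring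

lemma window_eq_iff (x y : FullShift d) (a b : ℤ) (n : ℕ) :
    window x a n = window y b n ↔ ∀ i : ℕ, i < n → x (a + i) = y (b + i) := by
  simp only [window]
  rw [List.ofFn_inj, funext_iff]
  exact ⟨fun h i hi => h ⟨i, hi⟩, fun h i => h i i.2⟩

lemma window_eq_list_iff (x : FullShift d) (a : ℤ) (g : List (Fin d)) :
    window x a g.length = g ↔ ∀ (l : ℕ) (hl : l < g.length), x (a + l) = g[l] := by
  constructor
  · intro h l hl
    have : (window x a g.length)[l]'(by simpa using hl) = g[l] := by simp [h]
    rw [← this]; simp [window]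
  · intro h
    refine List.ext_getElem (by simp) fun l h1 h2 => ?_
    simp [window, h l h2]

lemma mem_cyl_iff {n : ℕ} (x : FullShift d) (w : Fin n → Fin d) :
    x ∈ cyl w ↔ window x 0 n = List.ofFn w := by
  simp only [window, cyl, Set.mem_ofPred_eq]
  rw [List.ofFn_inj, funext_iff]
  simp

lemma window_fillWord (z : Fin d) (w : List (Fin d)) : window (fillWord z w) 0 w.length = w := by
  rw [window_eq_list_iff]
  intro l hl
  simp [fillWord, hl]

lemma isClopen_cyl {n : ℕ} (w : Fin n → Fin d) : IsClopen (cyl w) := by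
  have : cyl w = ⋂ i : Fin n, (fun x : FullShift d => x ((i : ℕ) : ℤ)) ⁻¹' {w i} := by
    ext x; simp [cyl]
  rw [this]
  exact isClopen_iInter_of_finite fun i => (isClopen_discrete _).preimage (continuous_apply _)

lemma measurableSet_cyl {n : ℕ} (w : Fin n → Fin d) : MeasurableSet (cyl w) :=
  (isClopen_cyl w).isOpen.measurableSet

lemma continuous_shift : Continuous (shift d) :=
  continuous_pi fun _ => continuous_apply _

end Words

section Gibbs

lemma negMulLog_add_mul_le {ι : Type*} (s : Finset ι) (p a : ι → ℝ) (hp : ∀ i ∈ s, 0 ≤ p i)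
    (hsum : ∑ i ∈ s, p i = 1) :
    ∑ i ∈ s, (Real.negMulLog (p i) + p i * a i) ≤ Real.log (∑ i ∈ s, Real.exp (a i)) := by
  have hs : s.Nonempty := by
    rw [Finset.nonempty_iff_ne_empty]; rintro rfl; simp at hsum
  set Z := ∑ i ∈ s, Real.exp (a i) with hZ
  have hZpos : 0 < Z := Finset.sum_pos (fun i _ => Real.exp_pos _) hs
  have key : ∀ i ∈ s, Real.negMulLog (p i) + p i * a i ≤
      Real.exp (a i) / Z - p i + p i * Real.log Z := by
    intro i hi
    rcases (hp i hi).eq_or_lt with h | h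
    · rw [← h]; simp; positivity
    · have h1 := Real.log_le_sub_one_of_pos (x := Real.exp (a i) / (Z * p i)) (by positivity)
      rw [Real.log_div (by positivity) (by positivity), Real.log_exp,
        Real.log_mul hZpos.ne' h.ne'] at h1
      have h2 := mul_le_mul_of_nonneg_left h1 h.le
      have h3 : p i * (Real.exp (a i) / (Z * p i) - 1) = Real.exp (a i) / Z - p i := by
        field_simp
      rw [h3] at h2
      simp only [Real.negMulLog]
      nlinarith
  refine (Finset.sum_le_sum key).trans ?_
  rw [Finset.sum_add_distrib, Finset.sum_sub_distrib, ← Finset.sum_div, ← Finset.sum_mul, hsum,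
    ← hZ, div_self hZpos.ne']
  simp

lemma negMulLog_add_le {p q : ℝ} (hp : 0 ≤ p) (hq : 0 ≤ q) :
    Real.negMulLog (p + q) ≤ Real.negMulLog p + Real.negMulLog q := by
  rcases hp.eq_or_lt with h | h
  · simp [← h]
  rcases hq.eq_or_lt with h' | h'
  · simp [← h']
  have h1 := Real.log_le_log h (by linarith : p ≤ p + q)
  have h2 := Real.log_le_log h' (by linarith : q ≤ p + q)
  simp only [Real.negMulLog]
  nlinarith

end Gibbs

section BlockEntropy

variable {d : ℕ}

/-- The entropy of the partition into cylinders of length `n`. -/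
def blockEnt (μ : Measure (FullShift d)) (n : ℕ) : ℝ :=
  ∑ w : Fin n → Fin d, Real.negMulLog (μ.real (cyl w))

lemma comp_window_eq_sum {n : ℕ} (F : List (Fin d) → ℝ) (x : FullShift d) :
    F (window x 0 n) =
      ∑ w : Fin n → Fin d, (cyl w).indicator (fun _ => F (List.ofFn w)) x := by
  classical
  rw [Finset.sum_eq_single (fun i : Fin n => x ((i : ℕ) : ℤ))]
  · rw [Set.indicator_of_mem (by simp [cyl])]
    simp [window]
  · intro w _ hw
    refine Set.indicator_of_notMem (fun hx => hw ?_) _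
    funext i; exact (hx i).symm
  · simp

lemma continuous_comp_window (n : ℕ) (F : List (Fin d) → ℝ) :
    Continuous fun x : FullShift d => F (window x 0 n) := by
  simp_rw [comp_window_eq_sum F]
  exact continuous_finsetSum _ fun w _ =>
    continuous_const.indicator fun a ha => by simp [(isClopen_cyl w).frontier_eq] at ha

lemma integrable_of_continuous {μ : Measure (FullShift d)} [IsFiniteMeasure μ]
    {ψ : FullShift d → ℝ} (hψ : Continuous ψ) : Integrable ψ μ :=
  hψ.integrable_of_hasCompactSupport (HasCompactSupport.of_compactSpace ψ)

lemma integral_comp_window {μ : Measure (FullShift d)} [IsFiniteMeasure μ] (n : ℕ)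
    (F : List (Fin d) → ℝ) :
    ∫ x, F (window x 0 n) ∂μ = ∑ w : Fin n → Fin d, μ.real (cyl w) * F (List.ofFn w) := by
  simp_rw [comp_window_eq_sum F]
  rw [integral_finsetSum]
  · refine Finset.sum_congr rfl fun w _ => ?_
    rw [integral_indicator_const _ (measurableSet_cyl w), smul_eq_mul]
  · exact fun w _ => (integrable_const _).indicator (measurableSet_cyl w)

lemma sum_real_cyl {μ : Measure (FullShift d)} [IsProbabilityMeasure μ] (n : ℕ) :
    ∑ w : Fin n → Fin d, μ.real (cyl w) = 1 := by
  have := integral_comp_window (μ := μ) n (fun _ => 1)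
  simpa using this.symm

lemma blockEnt_add_integral_le {μ : Measure (FullShift d)} [IsProbabilityMeasure μ] (n : ℕ)
    (a : List (Fin d) → ℝ) :
    blockEnt μ n + ∫ x, a (window x 0 n) ∂μ ≤ Real.log (∑ w ∈ words d n, Real.exp (a w)) := by
  rw [integral_comp_window, sum_words, blockEnt, ← Finset.sum_add_distrib]
  exact negMulLog_add_mul_le _ _ _ (fun _ _ => measureReal_nonneg) (sum_real_cyl n)

lemma blockEnt_nonneg {μ : Measure (FullShift d)} [IsProbabilityMeasure μ] (n : ℕ) :
    0 ≤ blockEnt μ n :=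
  Finset.sum_nonneg fun _ _ => Real.negMulLog_nonneg measureReal_nonneg measureReal_le_one

lemma blockEnt_le {μ : Measure (FullShift d)} [IsProbabilityMeasure μ] (n : ℕ) :
    blockEnt μ n ≤ n * Real.log d := by
  have := blockEnt_add_integral_le (μ := μ) n (fun _ => 0)
  rw [sum_words] at this
  simpa using this

lemma mEnt_eq (μ : Measure (FullShift d)) :
    mEnt μ = liminf (fun n : ℕ => (1 / (n + 1 : ℝ)) * blockEnt μ (n + 1)) atTop := rfl

lemma blockEnt_div_le {μ : Measure (FullShift d)} [IsProbabilityMeasure μ] (n : ℕ) :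
    (1 / (n + 1 : ℝ)) * blockEnt μ (n + 1) ≤ Real.log d := by
  have h := blockEnt_le (μ := μ) (n + 1)
  push_cast at h
  rw [one_div, inv_mul_le_iff₀ (by positivity)]
  exact h

lemma blockEnt_div_nonneg {μ : Measure (FullShift d)} [IsProbabilityMeasure μ] (n : ℕ) :
    0 ≤ (1 / (n + 1 : ℝ)) * blockEnt μ (n + 1) :=
  mul_nonneg (by positivity) (blockEnt_nonneg _)

lemma mEnt_le_of_eventually {μ : Measure (FullShift d)} [IsProbabilityMeasure μ] {c : ℝ}
    (h : ∀ᶠ n : ℕ in atTop, (1 / (n + 1 : ℝ)) * blockEnt μ (n + 1) ≤ c) : mEnt μ ≤ c := by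
  rw [mEnt_eq]
  exact liminf_le_of_frequently_le h.frequently
    (isBoundedUnder_of ⟨0, fun n => blockEnt_div_nonneg n⟩)

lemma le_mEnt_of_eventually {μ : Measure (FullShift d)} [IsProbabilityMeasure μ] {c : ℝ}
    (h : ∀ᶠ n : ℕ in atTop, c ≤ (1 / (n + 1 : ℝ)) * blockEnt μ (n + 1)) : c ≤ mEnt μ := by
  rw [mEnt_eq]
  exact le_liminf_of_le
    (isBoundedUnder_of ⟨Real.log d, fun n => blockEnt_div_le n⟩).isCoboundedUnder_ge h

lemma blockEnt_smul_add_smul_le {μ₁ μ₂ : Measure (FullShift d)} [IsProbabilityMeasure μ₁]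
    [IsProbabilityMeasure μ₂] {μ : Measure (FullShift d)} {a b : ℝ} (ha : 0 ≤ a) (hb : 0 ≤ b)
    (h : ∀ (n : ℕ) (w : Fin n → Fin d),
      μ.real (cyl w) = a * μ₁.real (cyl w) + b * μ₂.real (cyl w)) (n : ℕ) :
    blockEnt μ n ≤ a * blockEnt μ₁ n + b * blockEnt μ₂ n
      + (Real.negMulLog a + Real.negMulLog b) := by
  have key : ∀ w : Fin n → Fin d, Real.negMulLog (μ.real (cyl w)) ≤
      a * Real.negMulLog (μ₁.real (cyl w)) + b * Real.negMulLog (μ₂.real (cyl w)) +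
      (μ₁.real (cyl w) * Real.negMulLog a + μ₂.real (cyl w) * Real.negMulLog b) := by
    intro w
    rw [h]
    refine (negMulLog_add_le (mul_nonneg ha measureReal_nonneg)
      (mul_nonneg hb measureReal_nonneg)).trans ?_
    rw [Real.negMulLog_mul, Real.negMulLog_mul]
    linarith
  refine (Finset.sum_le_sum fun w _ => key w).trans (le_of_eq ?_)
  simp_rw [blockEnt, Finset.sum_add_distrib, ← Finset.mul_sum, ← Finset.sum_mul, sum_real_cyl]
  ring

end BlockEntropy

section SplitCost

variable {d : ℕ}

/-- Total cost of `w` when it is cut into consecutive pieces of length `q`, each weighted by `c`,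
the incomplete last piece being charged `log d` per letter. -/
def splitCost (q : ℕ) (c : List (Fin d) → ℝ) (w : List (Fin d)) : ℝ :=
  if 0 < q ∧ q ≤ w.length then c (w.take q) + splitCost q c (w.drop q)
  else w.length * Real.log d
termination_by w.length
decreasing_by simp; omega

lemma sum_exp_splitCost_le (hd : 0 < d) {q : ℕ} (hq : 0 < q) {c : List (Fin d) → ℝ}
    (hc : ∑ v ∈ words d q, Real.exp (-c v) ≤ 1) (n : ℕ) :
    ∑ w ∈ words d n, Real.exp (-splitCost q c w) ≤ 1 := by
  induction n using Nat.strong_induction_on with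
  | _ n ih =>
    by_cases hn : q ≤ n
    · obtain ⟨l, rfl⟩ := Nat.exists_eq_add_of_le hn
      rw [sum_words_add]
      have : ∀ u ∈ words d q, ∀ v ∈ words d l, Real.exp (-splitCost q c (u ++ v)) =
          Real.exp (-c u) * Real.exp (-splitCost q c v) := by
        intro u hu v hv
        rw [mem_words] at hu hv
        rw [splitCost, if_pos ⟨hq, by simp [hu]⟩, List.take_left' hu, List.drop_left' hu,
          ← Real.exp_add]
        congr 1; ring
      rw [Finset.sum_congr rfl fun u hu => Finset.sum_congr rfl (this u hu)]
      simp_rw [← Finset.mul_sum, ← Finset.sum_mul]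
      exact mul_le_one₀ hc (Finset.sum_nonneg fun _ _ => (Real.exp_pos _).le) (ih l (by omega))
    · have : ∀ w ∈ words d n, Real.exp (-splitCost q c w) = ((d : ℝ) ^ n)⁻¹ := by
        intro w hw
        rw [mem_words] at hw
        rw [splitCost, if_neg (by omega), hw, Real.exp_neg, ← Real.log_pow,
          Real.exp_log (by positivity)]
      rw [Finset.sum_congr rfl this, sum_words]
      have : (d : ℝ) ≠ 0 := by positivity
      simp [this]

lemma drop_window (x : FullShift d) (n j : ℕ) : (window x 0 n).drop j = window x j (n - j) := by
  rcases le_total j n with h | h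
  · obtain ⟨l, rfl⟩ := Nat.exists_eq_add_of_le h
    rw [window_add, List.drop_left' (by simp)]
    simp
  · rw [List.drop_eq_nil_of_le (by simpa using h), Nat.sub_eq_zero_of_le h]
    simp

lemma sum_exp_splitCost_drop_le (hd : 0 < d) {q : ℕ} (hq : 0 < q) {c : List (Fin d) → ℝ}
    (hc : ∑ v ∈ words d q, Real.exp (-c v) ≤ 1) (n j : ℕ) :
    ∑ w ∈ words d n, Real.exp (-splitCost q c (w.drop j)) ≤ (d : ℝ) ^ j := by
  have hd1 : (1 : ℝ) ≤ d := by exact_mod_cast hd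
  rcases le_total j n with h | h
  · obtain ⟨l, rfl⟩ := Nat.exists_eq_add_of_le h
    rw [sum_words_add]
    have : ∀ u ∈ words d j, ∑ v ∈ words d l, Real.exp (-splitCost q c ((u ++ v).drop j)) ≤ 1 := by
      intro u hu
      rw [mem_words] at hu
      simp_rw [List.drop_left' hu]
      exact sum_exp_splitCost_le hd hq hc l
    refine (Finset.sum_le_sum this).trans ?_
    rw [sum_words]; simp
  · have : ∀ w ∈ words d n, Real.exp (-splitCost q c (w.drop j)) = 1 := by
      intro w hw
      rw [mem_words] at hw
      rw [List.drop_eq_nil_of_le (by omega), splitCost, if_neg (by simp; omega)]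
      simp
    rw [Finset.sum_congr rfl this, sum_words]
    simpa using pow_le_pow_right₀ hd1 h

lemma sum_splitCost_window_le {q : ℕ} (hq : 0 < q) {c : List (Fin d) → ℝ}
    (hc : ∀ v ∈ words d q, 0 ≤ c v) (x : FullShift d) (n a : ℕ) :
    ∑ j ∈ Finset.range q, splitCost q c (window x ((a + j : ℕ) : ℤ) (n - (a + j))) ≤
      ∑ k ∈ Finset.Ico a n, c (window x k q) + q * (q * Real.log d) := by
  have hlog : 0 ≤ Real.log d := Real.log_natCast_nonneg d
  obtain ⟨r, hr⟩ : ∃ r, r = n - a := ⟨_, rfl⟩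
  induction r generalizing a with
  | zero =>
    rw [Finset.Ico_eq_empty (by omega)]
    have : ∀ j ∈ Finset.range q,
        splitCost q c (window x ((a + j : ℕ) : ℤ) (n - (a + j))) ≤ q * Real.log d := by
      intro j hj
      rw [Nat.sub_eq_zero_of_le (by omega), window_zero, splitCost, if_neg (by simp; omega)]
      simp; positivity
    refine (Finset.sum_le_sum this).trans ?_
    simp
  | succ r ih =>
    by_cases h : a + q ≤ n
    · have ih' := ih (a + 1) (by omega)
      rw [Finset.sum_eq_sum_Ico_succ_bot (by omega : a < n)]
      set L : ℕ → ℝ := fun i => splitCost q c (window x (i : ℤ) (n - i)) with hL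
      have hstep : L a = c (window x a q) + L (a + q) := by
        simp only [hL]
        obtain ⟨l, rfl⟩ := Nat.exists_eq_add_of_le h
        rw [show a + q + l - a = q + l by omega, show a + q + l - (a + q) = l by omega,
          window_add, splitCost, if_pos ⟨hq, by simp⟩, List.take_left' (by simp),
          List.drop_left' (by simp)]
        push_cast; rfl
      have hs : ∑ j ∈ Finset.range q, L (a + j) + L (a + q) =
          L a + ∑ j ∈ Finset.range q, L (a + 1 + j) := by
        rw [← Finset.sum_range_succ (fun j => L (a + j)), Finset.sum_range_succ', add_comm]
        simp only [add_zero]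
        congr 1
        exact Finset.sum_congr rfl fun j _ => by rw [add_assoc, add_comm 1 j]
      change ∑ j ∈ Finset.range q, L (a + 1 + j) ≤ _ at ih'
      change ∑ j ∈ Finset.range q, L (a + j) ≤ _
      linarith
    · have h0 : 0 ≤ ∑ k ∈ Finset.Ico a n, c (window x k q) :=
        Finset.sum_nonneg fun k _ => hc _ (window_mem_words _ _ _)
      have : ∀ j ∈ Finset.range q,
          splitCost q c (window x ((a + j : ℕ) : ℤ) (n - (a + j))) ≤ q * Real.log d := by
        intro j hj
        rw [splitCost, if_neg (by simp; omega)]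
        gcongr
        simp; omega
      have h1 := Finset.sum_le_sum this
      simp only [Finset.sum_const, Finset.card_range, nsmul_eq_mul] at h1
      linarith

end SplitCost

section Empirical

variable {d : ℕ}

lemma abs_birkhoff_le {ψ : FullShift d → ℝ} {K : ℝ} (hK : ∀ x, |ψ x| ≤ K) (n : ℕ)
    (x : FullShift d) : |birkhoff ψ n x| ≤ n * K := by
  refine (Finset.abs_sum_le_sum_abs _ _).trans ((Finset.sum_le_sum fun k _ => hK _).trans ?_)
  simp

lemma bddAbove_birkhoff {ψ : FullShift d → ℝ} {K : ℝ} (hK : ∀ x, |ψ x| ≤ K) (n : ℕ)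
    (S : Set (FullShift d)) : BddAbove (birkhoff ψ n '' S) := by
  refine ⟨n * K, ?_⟩
  rintro _ ⟨x, _, rfl⟩
  exact (abs_le.1 (abs_birkhoff_le hK n x)).2

lemma exists_bound {ψ : FullShift d → ℝ} (hψ : Continuous ψ) : ∃ K, 0 ≤ K ∧ ∀ x, |ψ x| ≤ K := by
  obtain ⟨K, hK⟩ := isCompact_univ.exists_bound_of_continuousOn hψ.continuousOn
  exact ⟨max K 0, le_max_right _ _, fun x => (hK x (Set.mem_univ x)).trans (le_max_left _ _)⟩

lemma Zfun_pos {X : Set (FullShift d)} (hX : X.Nonempty) (ψ : FullShift d → ℝ) (n : ℕ) :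
    0 < Zfun X ψ n := by
  classical
  obtain ⟨x, hx⟩ := hX
  refine Finset.sum_pos' (fun w _ => ?_) ⟨fun i : Fin n => x ((i : ℕ) : ℤ), Finset.mem_univ _, ?_⟩
  · split_ifs <;> positivity
  · rw [if_pos ⟨x, hx, by simp [cyl]⟩]
    positivity

lemma neg_le_log_Zfun {X : Set (FullShift d)} (hX : X.Nonempty) {ψ : FullShift d → ℝ} {K : ℝ}
    (hK : ∀ x, |ψ x| ≤ K) (n : ℕ) : -(n * K) ≤ Real.log (Zfun X ψ n) := by
  classical
  rw [Real.le_log_iff_exp_le (Zfun_pos hX ψ n)]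
  obtain ⟨x, hx⟩ := hX
  have hmem : x ∈ X ∩ cyl (fun i : Fin n => x ((i : ℕ) : ℤ)) := ⟨hx, by simp [cyl]⟩
  refine le_trans ?_ (Finset.single_le_sum (f := fun w : Fin n → Fin d =>
    if (X ∩ cyl w).Nonempty then Real.exp (sSup (birkhoff ψ n '' (X ∩ cyl w))) else 0)
    (fun w _ => ?_) (Finset.mem_univ (fun i : Fin n => x ((i : ℕ) : ℤ))))
  · rw [if_pos ⟨x, hmem⟩]
    exact Real.exp_le_exp.2 ((abs_le.1 (abs_birkhoff_le hK n x)).1.trans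
      (le_csSup (bddAbove_birkhoff hK n _) ⟨x, hmem, rfl⟩))
  · split_ifs <;> positivity

lemma pressure_le_log_Zfun {X : Set (FullShift d)} (hX : X.Nonempty) {ψ : FullShift d → ℝ}
    {K : ℝ} (hK : ∀ x, |ψ x| ≤ K) {n : ℕ} (hn : 0 < n) :
    n * pressure X ψ ≤ Real.log (Zfun X ψ n) := by
  obtain ⟨m, rfl⟩ := Nat.exists_eq_succ_of_ne_zero hn.ne'
  have hb : BddBelow (Set.range fun n : ℕ => (1 / (n + 1 : ℝ)) * Real.log (Zfun X ψ (n + 1))) := by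
    refine ⟨-K, ?_⟩
    rintro _ ⟨n, rfl⟩
    have := neg_le_log_Zfun hX hK (n + 1)
    simp only
    rw [one_div, ← div_eq_inv_mul, le_div_iff₀ (by positivity)]
    push_cast at this
    linarith
  have h : pressure X ψ ≤ (1 / (m + 1 : ℝ)) * Real.log (Zfun X ψ (m + 1)) := ciInf_le hb m
  rw [one_div, ← div_eq_inv_mul, le_div_iff₀ (by positivity)] at h
  push_cast
  linarith

/-- The combination of point masses at `y i` with weights `c i`. -/
def diracSum {ι : Type*} (s : Finset ι) (c : ι → ℝ) (y : ι → FullShift d) :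
    Measure (FullShift d) :=
  ∑ i ∈ s, ENNReal.ofReal (c i) • Measure.dirac (y i)

lemma integral_diracSum {ι : Type*} (s : Finset ι) {c : ι → ℝ} (hc : ∀ i ∈ s, 0 ≤ c i)
    (y : ι → FullShift d) {g : FullShift d → ℝ} (hg : Continuous g) :
    ∫ x, g x ∂(diracSum s c y) = ∑ i ∈ s, c i * g (y i) := by
  rw [diracSum, integral_finsetSum_measure]
  · refine Finset.sum_congr rfl fun i hi => ?_
    rw [integral_smul_measure, integral_dirac, ENNReal.toReal_ofReal (hc i hi), smul_eq_mul]
  · intro i _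
    exact (integrable_of_continuous hg).smul_measure ENNReal.ofReal_ne_top

lemma diracSum_apply_eq_one {ι : Type*} (s : Finset ι) {c : ι → ℝ} (hc : ∀ i ∈ s, 0 ≤ c i)
    (hsum : ∑ i ∈ s, c i = 1) (y : ι → FullShift d) {X : Set (FullShift d)}
    (hy : ∀ i ∈ s, y i ∈ X) : diracSum s c y X = 1 := by
  rw [diracSum, Measure.finsetSum_apply]
  have : ∀ i ∈ s, (ENNReal.ofReal (c i) • Measure.dirac (y i)) X = ENNReal.ofReal (c i) := by
    intro i hi
    rw [Measure.smul_apply, Measure.dirac_apply_of_mem (hy i hi), smul_eq_mul, mul_one]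
  rw [Finset.sum_congr rfl this, ← ENNReal.ofReal_sum_of_nonneg hc, hsum, ENNReal.ofReal_one]

end Empirical

section VariationalPrinciple

variable {d : ℕ}

lemma nonneg_of_sum_exp_neg_le {q : ℕ} {c : List (Fin d) → ℝ}
    (hc : ∑ v ∈ words d q, Real.exp (-c v) ≤ 1) : ∀ v ∈ words d q, 0 ≤ c v := by
  intro v hv
  have h := (Finset.single_le_sum (f := fun v => Real.exp (-c v))
    (fun _ _ => (Real.exp_pos _).le) hv).trans hc
  have := Real.exp_le_one_iff.1 h
  linarith

/-- Averages along orbit segments of the mass distribution with weights `exp (S_n ψ)`. -/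
lemma exists_empirical (hd : 0 < d) {X : Set (FullShift d)} (hX : X.Nonempty)
    (hinv : ∀ x ∈ X, shift d x ∈ X) {ψ : FullShift d → ℝ} (hψ : Continuous ψ) {n : ℕ}
    (hn : 0 < n) :
    ∃ ν : ProbabilityMeasure (FullShift d), (ν : Measure (FullShift d)) X = 1 ∧
      (∀ (g : FullShift d → ℝ) (K : ℝ), Continuous g → (∀ x, |g x| ≤ K) →
        |∫ x, g (shift d x) ∂(ν : Measure (FullShift d)) - ∫ x, g x ∂(ν : Measure (FullShift d))|
          ≤ 2 * K / n) ∧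
      ∀ (q : ℕ) (c : List (Fin d) → ℝ), 0 < q → ∑ v ∈ words d q, Real.exp (-c v) ≤ 1 →
        q * pressure X ψ ≤ ∫ x, c (window x 0 q) ∂(ν : Measure (FullShift d))
          + q * ∫ x, ψ x ∂(ν : Measure (FullShift d)) + (q + 2 * q * (q * Real.log d)) / n := by
  classical
  obtain ⟨K, -, hK⟩ := exists_bound hψ
  have hn' : (0 : ℝ) < n := by exact_mod_cast hn
  set S : Finset (Fin n → Fin d) := Finset.univ.filter fun w => (X ∩ cyl w).Nonempty with hS
  have hchoice : ∀ w : Fin n → Fin d, ∃ x, w ∈ S → x ∈ X ∩ cyl w ∧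
      sSup (birkhoff ψ n '' (X ∩ cyl w)) - 1 ≤ birkhoff ψ n x := by
    intro w
    by_cases hw : w ∈ S
    · have hne : (X ∩ cyl w).Nonempty := by simpa [hS] using hw
      obtain ⟨_, ⟨x, hx, rfl⟩, hlt⟩ := exists_lt_of_lt_csSup (hne.image (birkhoff ψ n))
        (sub_one_lt (sSup (birkhoff ψ n '' (X ∩ cyl w))))
      exact ⟨x, fun _ => ⟨hx, hlt.le⟩⟩
    · exact ⟨hX.some, fun h => absurd h hw⟩
  choose y hy using hchoice
  set Z : ℝ := ∑ w ∈ S, Real.exp (birkhoff ψ n (y w)) with hZ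
  have hSne : S.Nonempty := by
    obtain ⟨x, hx⟩ := hX
    exact ⟨fun i : Fin n => x ((i : ℕ) : ℤ), by
      simp only [hS, Finset.mem_filter, Finset.mem_univ, true_and]
      exact ⟨x, hx, by simp [cyl]⟩⟩
  have hZpos : 0 < Z := Finset.sum_pos (fun _ _ => Real.exp_pos _) hSne
  have hZle : Zfun X ψ n ≤ Real.exp 1 * Z := by
    rw [Zfun, ← Finset.sum_filter, hZ, Finset.mul_sum]
    refine Finset.sum_le_sum fun w hw => ?_
    rw [← Real.exp_add]
    exact Real.exp_le_exp.2 (by linarith [(hy w hw).2])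
  have hlogZ : n * pressure X ψ ≤ 1 + Real.log Z := by
    refine (pressure_le_log_Zfun hX hK hn).trans ?_
    have h := Real.log_le_log (Zfun_pos hX ψ n) hZle
    rwa [Real.log_mul (Real.exp_pos 1).ne' hZpos.ne', Real.log_exp 1] at h
  set r : (Fin n → Fin d) → ℝ := fun w => Real.exp (birkhoff ψ n (y w)) / Z with hr
  have hr0 : ∀ w, 0 < r w := fun w => by positivity
  have hr1 : ∑ w ∈ S, r w = 1 := by
    rw [hr, ← Finset.sum_div, div_self hZpos.ne']
  have hlogr : ∀ w, Real.negMulLog (r w) = r w * (Real.log Z - birkhoff ψ n (y w)) := by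
    intro w
    rw [Real.negMulLog]
    simp only [hr]
    rw [Real.log_div (Real.exp_pos _).ne' hZpos.ne', Real.log_exp]
    ring
  set T := S ×ˢ Finset.range n with hT
  set c' : (Fin n → Fin d) × ℕ → ℝ := fun p => r p.1 / n with hc'
  set y' : (Fin n → Fin d) × ℕ → FullShift d := fun p => (shift d)^[p.2] (y p.1) with hy'
  have hc0 : ∀ p ∈ T, 0 ≤ c' p := fun p _ => (div_pos (hr0 _) hn').le
  have hc1 : ∑ p ∈ T, c' p = 1 := by
    rw [hT, Finset.sum_product]
    simp only [hc', Finset.sum_const, Finset.card_range, nsmul_eq_mul]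
    simp_rw [mul_div_cancel₀ _ hn'.ne']
    exact hr1
  have hiter : ∀ k x, x ∈ X → (shift d)^[k] x ∈ X := by
    intro k
    induction k with
    | zero => simp
    | succ k ih => intro x hx; rw [Function.iterate_succ_apply]; exact ih _ (hinv x hx)
  have hyX : ∀ p ∈ T, y' p ∈ X := fun p hp =>
    hiter _ _ (hy p.1 (Finset.mem_product.1 hp).1).1.1
  have hprob : IsProbabilityMeasure (diracSum T c' y') :=
    ⟨diracSum_apply_eq_one T hc0 hc1 y' fun _ _ => Set.mem_univ _⟩
  have hgint : ∀ g : FullShift d → ℝ, Continuous g → ∫ x, g x ∂(diracSum T c' y') =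
      ∑ w ∈ S, r w / n * ∑ k ∈ Finset.range n, g ((shift d)^[k] (y w)) := by
    intro g hg
    rw [integral_diracSum T hc0 y' hg, hT, Finset.sum_product]
    simp only [hc', hy', Finset.mul_sum]
  refine ⟨⟨diracSum T c' y', hprob⟩, diracSum_apply_eq_one T hc0 hc1 y' hyX, ?_, ?_⟩
  · intro g K hg hgK
    change |∫ x, g (shift d x) ∂(diracSum T c' y') - ∫ x, g x ∂(diracSum T c' y')| ≤ _
    rw [hgint (fun x => g (shift d x)) (hg.comp continuous_shift), hgint g hg, ← Finset.sum_sub_distrib]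
    have : ∀ w ∈ S, |r w / n * ∑ k ∈ Finset.range n, g (shift d ((shift d)^[k] (y w))) -
        r w / n * ∑ k ∈ Finset.range n, g ((shift d)^[k] (y w))| ≤ r w * (2 * K / n) := by
      intro w _
      rw [← mul_sub, ← Finset.sum_sub_distrib]
      simp_rw [← Function.iterate_succ_apply']
      rw [Finset.sum_range_sub (fun k => g ((shift d)^[k] (y w))), abs_mul,
        abs_of_pos (div_pos (hr0 w) hn')]
      have h1 := (abs_sub (g ((shift d)^[n] (y w))) (g ((shift d)^[0] (y w)))).trans
        (add_le_add (hgK _) (hgK _))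
      calc _ ≤ r w / n * (K + K) := mul_le_mul_of_nonneg_left h1 (div_pos (hr0 w) hn').le
        _ = _ := by ring
    refine (Finset.abs_sum_le_sum_abs _ _).trans ((Finset.sum_le_sum this).trans ?_)
    rw [← Finset.sum_mul, hr1, one_mul]
  · intro q c hq hc
    change _ ≤ ∫ x, c (window x 0 q) ∂(diracSum T c' y') + q * ∫ x, ψ x ∂(diracSum T c' y') + _
    rw [hgint _ (continuous_comp_window q c), hgint ψ hψ]
    have hwin : ∀ w ∈ S, List.ofFn w = window (y w) 0 n := fun w hw =>
      ((mem_cyl_iff _ _).1 (hy w hw).1.2).symm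
    have hj : ∀ j ∈ Finset.range q, Real.log Z ≤ ∑ w ∈ S, r w * birkhoff ψ n (y w) +
        ∑ w ∈ S, r w * splitCost q c (window (y w) ((0 + j : ℕ) : ℤ) (n - (0 + j)))
          + q * Real.log d := by
      intro j hj
      have hG := negMulLog_add_mul_le S r (fun w => -splitCost q c ((List.ofFn w).drop j))
        (fun w _ => (hr0 w).le) hr1
      have hlog : Real.log (∑ w ∈ S, Real.exp (-splitCost q c ((List.ofFn w).drop j))) ≤
          q * Real.log d := by
        have h1 : ∑ w ∈ S, Real.exp (-splitCost q c ((List.ofFn w).drop j)) ≤ (d : ℝ) ^ j := by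
          refine le_trans ?_ (sum_exp_splitCost_drop_le hd hq hc n j)
          rw [sum_words]
          exact Finset.sum_le_sum_of_subset_of_nonneg (Finset.subset_univ _)
            fun _ _ _ => (Real.exp_pos _).le
        refine (Real.log_le_log (Finset.sum_pos (fun _ _ => Real.exp_pos _) hSne) h1).trans ?_
        rw [Real.log_pow]
        have : (j : ℝ) ≤ q := by exact_mod_cast (Finset.mem_range.1 hj).le
        exact mul_le_mul_of_nonneg_right this (Real.log_natCast_nonneg d)
      have hsum : ∑ w ∈ S, (Real.negMulLog (r w) +
          r w * -splitCost q c ((List.ofFn w).drop j)) = Real.log Z -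
          ∑ w ∈ S, r w * birkhoff ψ n (y w) -
          ∑ w ∈ S, r w * splitCost q c (window (y w) ((0 + j : ℕ) : ℤ) (n - (0 + j))) := by
        have : ∀ w ∈ S, Real.negMulLog (r w) + r w * -splitCost q c ((List.ofFn w).drop j) =
            r w * Real.log Z - r w * birkhoff ψ n (y w) -
            r w * splitCost q c (window (y w) ((0 + j : ℕ) : ℤ) (n - (0 + j))) := by
          intro w hw
          rw [hlogr, hwin w hw, drop_window, zero_add]
          ring
        rw [Finset.sum_congr rfl this, Finset.sum_sub_distrib, Finset.sum_sub_distrib,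
          ← Finset.sum_mul, hr1, one_mul]
      linarith
    have hsumj := Finset.sum_le_sum hj
    rw [Finset.sum_const, Finset.card_range, nsmul_eq_mul, Finset.sum_add_distrib,
      Finset.sum_add_distrib, Finset.sum_const, Finset.sum_const, Finset.card_range,
      nsmul_eq_mul, nsmul_eq_mul, Finset.sum_comm] at hsumj
    have hcost : ∑ w ∈ S, ∑ j ∈ Finset.range q,
        r w * splitCost q c (window (y w) ((0 + j : ℕ) : ℤ) (n - (0 + j))) ≤
        ∑ w ∈ S, r w * ∑ k ∈ Finset.range n, c (window (y w) k q) + q * (q * Real.log d) := by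
      have : ∀ w ∈ S, ∑ j ∈ Finset.range q,
          r w * splitCost q c (window (y w) ((0 + j : ℕ) : ℤ) (n - (0 + j))) ≤
          r w * ∑ k ∈ Finset.range n, c (window (y w) k q) + r w * (q * (q * Real.log d)) := by
        intro w _
        rw [← Finset.mul_sum, ← mul_add, Finset.range_eq_Ico (a := n)]
        exact mul_le_mul_of_nonneg_left
          (sum_splitCost_window_le hq (nonneg_of_sum_exp_neg_le hc) (y w) n 0) (hr0 w).le
      refine (Finset.sum_le_sum this).trans ?_
      rw [Finset.sum_add_distrib, ← Finset.sum_mul, hr1, one_mul]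
    have e1 : ∑ w ∈ S, r w / n * ∑ k ∈ Finset.range n, c (window ((shift d)^[k] (y w)) 0 q) =
        (∑ w ∈ S, r w * ∑ k ∈ Finset.range n, c (window (y w) k q)) / n := by
      rw [Finset.sum_div]
      refine Finset.sum_congr rfl fun w _ => ?_
      simp_rw [window_shift, zero_add]
      ring
    have e2 : ∑ w ∈ S, r w / n * ∑ k ∈ Finset.range n, ψ ((shift d)^[k] (y w)) =
        (∑ w ∈ S, r w * birkhoff ψ n (y w)) / n := by
      rw [Finset.sum_div]
      refine Finset.sum_congr rfl fun w _ => ?_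
      rw [birkhoff]; ring
    rw [e1, e2, mul_div_assoc', ← add_div, ← add_div, le_div_iff₀ hn']
    have hq' : (0 : ℝ) < q := by exact_mod_cast hq
    have := mul_le_mul_of_nonneg_left hlogZ hq'.le
    nlinarith

/-- Half of the variational principle: some invariant measure has free energy at least the
pressure, at every block length. -/
theorem exists_invProb_pressure_le (hd : 0 < d) {X : Set (FullShift d)} (hX : X.Nonempty)
    (hclosed : IsClosed X) (hinv : ∀ x ∈ X, shift d x ∈ X) {ψ : FullShift d → ℝ}
    (hψ : Continuous ψ) :
    ∃ μ ∈ InvProb X, ∀ q : ℕ, 0 < q → q * pressure X ψ ≤ blockEnt μ q + q * ∫ x, ψ x ∂μ := by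
  classical
  have hdpos : (0 : ℝ) < d := by exact_mod_cast hd
  choose ν hνX hνinv hνq using fun n : ℕ =>
    exists_empirical hd hX hinv hψ (n := n + 1) (Nat.succ_pos n)
  set U : Ultrafilter ℕ := Ultrafilter.of atTop
  have hU : (U : Filter ℕ) ≤ atTop := Ultrafilter.of_le atTop
  obtain ⟨μ, -, hμ⟩ := (isCompact_univ (X := ProbabilityMeasure (FullShift d))).ultrafilter_le_nhds
    (U.map ν) (by simp)
  have hlim : Tendsto ν U (𝓝 μ) := hμ
  have hgint : ∀ g : FullShift d → ℝ, Continuous g →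
      Tendsto (fun n => ∫ x, g x ∂(ν n : Measure (FullShift d))) U
        (𝓝 (∫ x, g x ∂(μ : Measure (FullShift d)))) := fun g hg =>
    (ProbabilityMeasure.tendsto_iff_forall_integral_tendsto.1 hlim)
      (BoundedContinuousFunction.mkOfCompact ⟨g, hg⟩)
  have hdiv : ∀ C : ℝ, Tendsto (fun n : ℕ => C / ((n + 1 : ℕ) : ℝ)) U (𝓝 0) := fun C =>
    ((tendsto_const_div_atTop_nhds_zero_nat C).comp (tendsto_add_atTop_nat 1)).mono_left hU
  refine ⟨μ, ⟨inferInstance, ?_, ?_⟩, ?_⟩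
  · have : IsProbabilityMeasure ((μ : Measure (FullShift d)).map (shift d)) :=
      Measure.isProbabilityMeasure_map continuous_shift.measurable.aemeasurable
    refine ext_of_forall_integral_eq_of_IsFiniteMeasure fun g => ?_
    rw [integral_map continuous_shift.measurable.aemeasurable
      g.continuous.aestronglyMeasurable]
    have h1 := (hgint (fun x => g (shift d x)) (g.continuous.comp continuous_shift)).sub
      (hgint g g.continuous)
    have h2 : Tendsto (fun n => ∫ x, g (shift d x) ∂(ν n : Measure (FullShift d)) -
        ∫ x, g x ∂(ν n : Measure (FullShift d))) U (𝓝 0) :=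
      squeeze_zero_norm (fun n => hνinv n g ‖g‖ g.continuous fun x => g.norm_coe_le_norm x)
        (hdiv _)
    exact sub_eq_zero.1 (tendsto_nhds_unique h1 h2)
  · refine le_antisymm prob_le_one ?_
    have h := ProbabilityMeasure.limsup_measure_closed_le_of_tendsto hlim hclosed
    simpa [hνX] using h
  · intro q hq
    have hq' : (0 : ℝ) < q := by exact_mod_cast hq
    have hlin : ∀ c : List (Fin d) → ℝ, ∑ v ∈ words d q, Real.exp (-c v) ≤ 1 →
        q * pressure X ψ ≤ ∫ x, c (window x 0 q) ∂(μ : Measure (FullShift d)) +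
          q * ∫ x, ψ x ∂(μ : Measure (FullShift d)) := by
      intro c hc
      have h1 := ((hgint _ (continuous_comp_window q c)).add ((hgint ψ hψ).const_mul (q : ℝ))).add
        (hdiv (q + 2 * q * (q * Real.log d)))
      rw [add_zero] at h1
      exact ge_of_tendsto' h1 fun n => hνq n q c hq hc
    refine le_of_forall_pos_le_add fun ε hε => ?_
    set m : List (Fin d) → ℝ := fun v => (μ : Measure (FullShift d)).real {x | window x 0 q = v}
      with hm
    have hmcyl : ∀ w : Fin q → Fin d,
        m (List.ofFn w) = (μ : Measure (FullShift d)).real (cyl w) := by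
      intro w
      simp only [hm]
      congr 1; ext x; exact (mem_cyl_iff x w).symm
    have hm0 : ∀ v, 0 ≤ m v := fun v => measureReal_nonneg
    set t := Real.exp (-ε) with ht
    have ht0 : 0 < t := Real.exp_pos _
    have ht1 : t < 1 := Real.exp_lt_one_iff.2 (by linarith)
    set ρ : List (Fin d) → ℝ := fun v => t * m v + (1 - t) * ((d : ℝ) ^ q)⁻¹ with hρ
    have hρ0 : ∀ v, 0 < ρ v := fun v =>
      add_pos_of_nonneg_of_pos (mul_nonneg ht0.le (hm0 v)) (mul_pos (by linarith) (by positivity))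
    have hbound := hlin (fun v => -Real.log (ρ v)) (by
      simp_rw [neg_neg, Real.exp_log (hρ0 _)]
      simp only [hρ]
      rw [sum_words, Finset.sum_add_distrib, ← Finset.mul_sum]
      simp_rw [hmcyl]
      rw [sum_real_cyl]
      have : ((d : ℝ) ^ q) ≠ 0 := by positivity
      simp
      field_simp
      linarith)
    refine hbound.trans ?_
    rw [integral_comp_window q (fun v => -Real.log (ρ v)), blockEnt]
    have : ∀ w : Fin q → Fin d, (μ : Measure (FullShift d)).real (cyl w) *
        -Real.log (ρ (List.ofFn w)) ≤ Real.negMulLog ((μ : Measure (FullShift d)).real (cyl w)) +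
          (μ : Measure (FullShift d)).real (cyl w) * ε := by
      intro w
      rw [← hmcyl]
      rcases (hm0 (List.ofFn w)).eq_or_lt with h | h
      · rw [← h]; simp
      · have h1 : t * m (List.ofFn w) ≤ ρ (List.ofFn w) := by
          simp only [hρ]
          have : 0 ≤ (1 - t) * ((d : ℝ) ^ q)⁻¹ := mul_nonneg (by linarith) (by positivity)
          linarith
        have h2 := Real.log_le_log (mul_pos ht0 h) h1
        rw [Real.log_mul ht0.ne' h.ne', ht, Real.log_exp] at h2
        rw [Real.negMulLog]
        nlinarith
    have hs := Finset.sum_le_sum fun w (_ : w ∈ (Finset.univ : Finset (Fin q → Fin d))) => this w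
    rw [Finset.sum_add_distrib, ← Finset.sum_mul, sum_real_cyl, one_mul] at hs
    linarith

end VariationalPrinciple

section Concatenations

variable {α : Type*}

/-- `w` is a finite concatenation of words from `S`. -/
def IsConcat (S : Set (List α)) (w : List α) : Prop :=
  ∃ L : List (List α), (∀ g ∈ L, g ∈ S) ∧ L.flatten = w

/-- `w` is a concatenation of words from `S` and of `b` single letters. -/
inductive Patched (S : Set (List α)) : ℕ → List α → Prop
  | nil : Patched S 0 []
  | gen {g w : List α} {b : ℕ} (hg : g ∈ S) (h : Patched S b w) : Patched S b (g ++ w)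
  | letter (a : α) {w : List α} {b : ℕ} (h : Patched S b w) : Patched S (b + 1) (a :: w)

/-- The least number of single letters needed to write `w` as a concatenation of such letters
and of words from `S`. -/
def badCount (S : Set (List α)) (w : List α) : ℕ := sInf {b | Patched S b w}

lemma IsConcat.append {S : Set (List α)} {u v : List α} (hu : IsConcat S u) (hv : IsConcat S v) :
    IsConcat S (u ++ v) := by
  obtain ⟨L, hL, rfl⟩ := hu
  obtain ⟨M, hM, rfl⟩ := hv
  exact ⟨L ++ M, by simpa [or_imp, forall_and] using ⟨hL, hM⟩, by simp⟩

lemma Patched.append {S : Set (List α)} {u v : List α} {b c : ℕ} (hu : Patched S b u)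
    (hv : Patched S c v) : Patched S (b + c) (u ++ v) := by
  induction hu with
  | nil => simpa using hv
  | gen hg _ ih => rw [List.append_assoc]; exact .gen hg ih
  | letter a _ ih => rw [add_right_comm]; exact .letter a ih

lemma patched_length (S : Set (List α)) (w : List α) : Patched S w.length w := by
  induction w with
  | nil => exact .nil
  | cons a w ih => exact .letter a ih

lemma Patched.isConcat_or {S : Set (List α)} {w : List α} {b : ℕ} (h : Patched S b w) :
    IsConcat S w ∨ ∃ r a w' b', b = b' + 1 ∧ w = r ++ a :: w' ∧ IsConcat S r ∧
      Patched S b' w' := by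
  induction h with
  | nil => exact .inl ⟨[], by simp, rfl⟩
  | @gen g w b hg h ih =>
    have hg' : IsConcat S g := ⟨[g], by simpa using hg, by simp⟩
    rcases ih with ih | ⟨r, a, w', b', rfl, rfl, hr, hw'⟩
    · exact .inl (hg'.append ih)
    · exact .inr ⟨g ++ r, a, w', b', rfl, by simp, hg'.append hr, hw'⟩
  | @letter a w b h ih => exact .inr ⟨[], a, w, b, rfl, rfl, ⟨[], by simp, rfl⟩, h⟩

lemma patched_badCount (S : Set (List α)) (w : List α) : Patched S (badCount S w) w :=
  Nat.sInf_mem (s := {b | Patched S b w}) ⟨_, patched_length S w⟩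

lemma badCount_le {S : Set (List α)} {w : List α} {b : ℕ} (h : Patched S b w) :
    badCount S w ≤ b := Nat.sInf_le h

lemma badCount_append_le (S : Set (List α)) (u v : List α) :
    badCount S (u ++ v) ≤ badCount S u + badCount S v :=
  badCount_le ((patched_badCount S u).append (patched_badCount S v))

lemma badCount_le_length (S : Set (List α)) (w : List α) : badCount S w ≤ w.length :=
  badCount_le (patched_length S w)

lemma badCount_eq_zero {S : Set (List α)} {g : List α} (hg : g ∈ S) : badCount S g = 0 :=
  Nat.le_zero.1 (badCount_le (by simpa using Patched.gen hg .nil))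

end Concatenations

section ConcatSums

variable {d : ℕ}

open Classical in
/-- Sum of `exp (s w)` over the words of length `n` which are concatenations from `S`. -/
def concatSum (S : Set (List (Fin d))) (s : List (Fin d) → ℝ) (n : ℕ) : ℝ :=
  ∑ w ∈ (words d n).filter (IsConcat S), Real.exp (s w)

/-- Sum of `exp (s w - C * badCount S w)` over all words of length `n`. -/
def patchedSum (S : Set (List (Fin d))) (s : List (Fin d) → ℝ) (C : ℝ) (n : ℕ) : ℝ :=
  ∑ w ∈ words d n, Real.exp (s w - C * badCount S w)

lemma concatSum_nonneg (S : Set (List (Fin d))) (s : List (Fin d) → ℝ) (n : ℕ) :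
    0 ≤ concatSum S s n := Finset.sum_nonneg fun _ _ => (Real.exp_pos _).le

lemma concatSum_mul_le {S : Set (List (Fin d))} {s : List (Fin d) → ℝ} {D : ℝ}
    (hs : ∀ u v, |s (u ++ v) - s u - s v| ≤ D) (k l : ℕ) :
    concatSum S s k * concatSum S s l ≤ Real.exp D * concatSum S s (k + l) := by
  classical
  simp only [concatSum, Finset.sum_filter]
  rw [sum_words_add, Finset.sum_mul_sum, Finset.mul_sum]
  refine Finset.sum_le_sum fun u _ => ?_
  rw [Finset.mul_sum]
  refine Finset.sum_le_sum fun v _ => ?_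
  by_cases hu : IsConcat S u
  · by_cases hv : IsConcat S v
    · rw [if_pos hu, if_pos hv, if_pos (hu.append hv), ← Real.exp_add, ← Real.exp_add]
      have := (abs_le.1 (hs u v)).1
      exact Real.exp_le_exp.2 (by linarith)
    · rw [if_neg hv, mul_zero]
      split_ifs <;> positivity
  · rw [if_neg hu, zero_mul]
    split_ifs <;> positivity

lemma concatSum_pow_le {S : Set (List (Fin d))} {s : List (Fin d) → ℝ} {D : ℝ}
    (hs : ∀ u v, |s (u ++ v) - s u - s v| ≤ D) (k r : ℕ) :
    concatSum S s k ^ (r + 1) ≤ Real.exp (D * r) * concatSum S s (k * (r + 1)) := by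
  induction r with
  | zero => simp
  | succ r ih =>
    rw [pow_succ]
    calc _ ≤ Real.exp (D * r) * concatSum S s (k * (r + 1)) * concatSum S s k :=
          mul_le_mul_of_nonneg_right ih (concatSum_nonneg _ _ _)
      _ ≤ Real.exp (D * r) * (Real.exp D * concatSum S s (k * (r + 1) + k)) := by
          rw [mul_assoc]
          exact mul_le_mul_of_nonneg_left (concatSum_mul_le hs _ _) (Real.exp_pos _).le
      _ = _ := by
          rw [← mul_assoc, ← Real.exp_add, mul_add k (r + 1) 1]
          push_cast; ring_nf

lemma patchedSum_le_sum {S : Set (List (Fin d))} {s : List (Fin d) → ℝ} {D K C : ℝ}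
    (hs : ∀ u v, |s (u ++ v) - s u - s v| ≤ D) (hs1 : ∀ a, s [a] ≤ K) (hC : 0 ≤ C) (n : ℕ) :
    patchedSum S s C n ≤ concatSum S s n + ∑ l ∈ Finset.range n,
      concatSum S s (n - 1 - l) * (d * Real.exp (K + 2 * D - C) * patchedSum S s C l) := by
  classical
  set T : Finset (Σ _ : ℕ, List (Fin d) × Fin d × List (Fin d)) :=
    (Finset.range n).sigma fun l =>
      (words d (n - 1 - l)).filter (IsConcat S) ×ˢ (Finset.univ ×ˢ words d l) with hT
  set e : (Σ _ : ℕ, List (Fin d) × Fin d × List (Fin d)) → List (Fin d) :=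
    fun t => t.2.1 ++ t.2.2.1 :: t.2.2.2 with he
  set v : (Σ _ : ℕ, List (Fin d) × Fin d × List (Fin d)) → ℝ := fun t =>
    Real.exp (s t.2.1) * (Real.exp (K + 2 * D - C) *
      Real.exp (s t.2.2.2 - C * badCount S t.2.2.2)) with hv
  have hTsum : ∑ t ∈ T, v t = ∑ l ∈ Finset.range n,
      concatSum S s (n - 1 - l) * (d * Real.exp (K + 2 * D - C) * patchedSum S s C l) := by
    rw [hT, Finset.sum_sigma]
    refine Finset.sum_congr rfl fun l _ => ?_
    simp only [hv, concatSum, patchedSum]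
    rw [Finset.sum_product, Finset.sum_mul]
    refine Finset.sum_congr rfl fun u _ => ?_
    simp only
    rw [Finset.sum_product]
    simp only [← Finset.mul_sum, Finset.sum_const, Finset.card_univ, Fintype.card_fin,
      nsmul_eq_mul]
    ring
  have hpoint : ∀ w ∈ words d n, Real.exp (s w - C * badCount S w) ≤
      (if IsConcat S w then Real.exp (s w) else 0) + ∑ t ∈ T.filter (fun t => e t = w), v t := by
    intro w hw
    have hvnn : 0 ≤ ∑ t ∈ T.filter (fun t => e t = w), v t :=
      Finset.sum_nonneg fun t _ => by simp only [hv]; positivity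
    rcases (patched_badCount S w).isConcat_or with h | ⟨r, a, w', b', hb, hw', hr, hp⟩
    · rw [if_pos h]
      have : Real.exp (s w - C * badCount S w) ≤ Real.exp (s w) :=
        Real.exp_le_exp.2 (by have : 0 ≤ C * badCount S w := by positivity
                              linarith)
      linarith
    · have hlen : r.length + (w'.length + 1) = n := by
        rw [mem_words, hw'] at hw; simpa using hw
      have hmem : (⟨w'.length, r, a, w'⟩ : Σ _ : ℕ, List (Fin d) × Fin d × List (Fin d)) ∈
          T.filter (fun t => e t = w) := by
        simp only [hT, he, Finset.mem_filter, Finset.mem_sigma, Finset.mem_range,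
          Finset.mem_product, mem_words, Finset.mem_univ, true_and]
        refine ⟨⟨by omega, ⟨by omega, hr⟩, trivial⟩, hw'.symm⟩
      have h1 := Finset.single_le_sum (f := v) (fun t _ => by simp only [hv]; positivity) hmem
      have h2 : Real.exp (s w - C * badCount S w) ≤ v ⟨w'.length, r, a, w'⟩ := by
        simp only [hv]
        rw [← Real.exp_add, ← Real.exp_add]
        refine Real.exp_le_exp.2 ?_
        have hle : (badCount S w' : ℝ) ≤ b' := by exact_mod_cast badCount_le hp
        have e1 := (abs_le.1 (hs r (a :: w'))).2
        have e2 := (abs_le.1 (hs [a] w')).2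
        rw [List.singleton_append] at e2
        have e3 := hs1 a
        rw [hb, hw']
        push_cast
        nlinarith
      have h3 : (0 : ℝ) ≤ if IsConcat S w then Real.exp (s w) else 0 := by
        split_ifs <;> positivity
      linarith
  refine (Finset.sum_le_sum hpoint).trans ?_
  rw [Finset.sum_add_distrib, ← Finset.sum_filter, ← hTsum]
  refine add_le_add le_rfl ?_
  refine Finset.sum_fiberwise_le_sum_of_sum_fiber_nonneg fun w _ => ?_
  exact Finset.sum_nonneg fun t _ => by simp only [hv]; positivity

lemma patchedSum_le {S : Set (List (Fin d))} {s : List (Fin d) → ℝ} {D K C A Q : ℝ}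
    (hs : ∀ u v, |s (u ++ v) - s u - s v| ≤ D) (hs1 : ∀ a, s [a] ≤ K) (hC : 0 ≤ C) (hA : 0 ≤ A)
    (hY : ∀ k : ℕ, concatSum S s k ≤ A * Real.exp (k * Q)) (n : ℕ) :
    patchedSum S s C n ≤ A * Real.exp (n * Q) *
      (1 + A * (d * Real.exp (K + 2 * D - C)) * Real.exp (-Q)) ^ n := by
  set κ := (d : ℝ) * Real.exp (K + 2 * D - C) with hκ
  have hκ0 : 0 ≤ κ := by positivity
  set θ := A * κ * Real.exp (-Q) with hθ
  have hθ0 : 0 ≤ θ := by positivity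
  induction n using Nat.strong_induction_on with
  | _ n ih =>
    refine (patchedSum_le_sum hs hs1 hC n).trans ?_
    have hterm : ∀ l ∈ Finset.range n, concatSum S s (n - 1 - l) * (κ * patchedSum S s C l) ≤
        A * Real.exp (n * Q) * (θ * (1 + θ) ^ l) := by
      intro l hl
      have hl' := Finset.mem_range.1 hl
      have h1 := hY (n - 1 - l)
      have h2 := ih l hl'
      have hcast : ((n - 1 - l : ℕ) : ℝ) = n - 1 - l := by
        rw [Nat.cast_sub (by omega), Nat.cast_sub (by omega)]; simp
      rw [hcast] at h1
      calc _ ≤ A * Real.exp ((n - 1 - l) * Q) * (κ * (A * Real.exp (l * Q) * (1 + θ) ^ l)) :=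
            mul_le_mul h1 (mul_le_mul_of_nonneg_left h2 hκ0)
              (mul_nonneg hκ0 (Finset.sum_nonneg fun _ _ => (Real.exp_pos _).le)) (by positivity)
        _ = A * (A * κ) * (1 + θ) ^ l * (Real.exp ((n - 1 - l) * Q) * Real.exp (l * Q)) := by ring
        _ = A * (A * κ) * (1 + θ) ^ l * (Real.exp (n * Q) * Real.exp (-Q)) := by
            rw [← Real.exp_add, ← Real.exp_add]; ring_nf
        _ = _ := by rw [hθ]; ring
    have hgeom : ∑ l ∈ Finset.range n, θ * (1 + θ) ^ l = (1 + θ) ^ n - 1 := by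
      rw [← Finset.mul_sum]
      have := mul_geom_sum (1 + θ) n
      simpa using this
    refine (add_le_add (hY n) (Finset.sum_le_sum hterm)).trans (le_of_eq ?_)
    rw [← Finset.mul_sum, hgeom]
    ring

end ConcatSums

section CodedShift

variable {d : ℕ} {𝒢 : Set (List (Fin d))}

lemma Xseq_mono {S T : Set (List (Fin d))} (h : S ⊆ T) : Xseq S ⊆ Xseq T := by
  rintro x ⟨p, hp, hp'⟩
  refine ⟨p, hp, fun j => ?_⟩
  obtain ⟨g, hg, hgj⟩ := hp' j
  exact ⟨g, h hg, hgj⟩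

lemma codedShift_mono {S T : Set (List (Fin d))} (h : S ⊆ T) : codedShift S ⊆ codedShift T :=
  closure_mono (Xseq_mono h)

lemma isParsing_iff {x : FullShift d} {p : ℤ → ℤ} : IsParsing 𝒢 x p ↔ StrictMono p ∧
    ∀ j : ℤ, ∃ g ∈ 𝒢, p (j + 1) = p j + g.length ∧ window x (p j) g.length = g := by
  simp only [IsParsing, window_eq_list_iff]

lemma isParsing_shift_iterate {x : FullShift d} {p : ℤ → ℤ} (k : ℕ) :
    IsParsing 𝒢 ((shift d)^[k] x) (fun j => p j - k) ↔ IsParsing 𝒢 x p := by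
  simp only [isParsing_iff, window_shift, sub_add_cancel]
  refine and_congr ⟨fun h a b hab => ?_, fun h a b hab => ?_⟩
    (forall_congr' fun j => exists_congr fun g => and_congr_right fun _ =>
      and_congr_left fun _ => by constructor <;> intro h <;> linarith)
  · have := h hab; simpa using this
  · have := h hab; simpa using this

lemma shift_iterate_mem_Xseq (k : ℕ) {x : FullShift d} :
    (shift d)^[k] x ∈ Xseq 𝒢 ↔ x ∈ Xseq 𝒢 := by
  constructor
  · rintro ⟨p, hp⟩
    refine ⟨fun j => p j + k, (isParsing_shift_iterate k).1 ?_⟩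
    simpa using hp
  · rintro ⟨p, hp⟩
    exact ⟨_, (isParsing_shift_iterate k).2 hp⟩

lemma preimage_shift_Xseq : shift d ⁻¹' Xseq 𝒢 = Xseq 𝒢 := by
  ext x
  exact shift_iterate_mem_Xseq 1

lemma shift_mem_codedShift {x : FullShift d} (hx : x ∈ codedShift 𝒢) :
    shift d x ∈ codedShift 𝒢 := by
  refine map_mem_closure continuous_shift hx fun y hy => ?_
  exact (shift_iterate_mem_Xseq 1).2 hy

lemma shift_iterate_mem {X : Set (FullShift d)} (hinv : ∀ x ∈ X, shift d x ∈ X) {x : FullShift d}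
    (hx : x ∈ X) (k : ℕ) : (shift d)^[k] x ∈ X := by
  induction k with
  | zero => exact hx
  | succ k ih => rw [Function.iterate_succ_apply']; exact hinv _ ih

lemma mem_Xseq_of_chain (hne : ∀ g ∈ 𝒢, g ≠ []) {x : FullShift d} {C : Set ℤ} (hC : C.Nonempty)
    (hnext : ∀ i ∈ C, ∃ g ∈ 𝒢, i + g.length ∈ C ∧ window x i g.length = g)
    (hprev : ∀ i ∈ C, ∃ g ∈ 𝒢, i - g.length ∈ C ∧ window x (i - g.length) g.length = g) :
    x ∈ Xseq 𝒢 := by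
  set R : ℤ → ℤ → Prop := fun i j => ∃ g ∈ 𝒢, j = i + g.length ∧ window x i g.length = g with hR
  have h1 : ∀ i : C, ∃ j : C, R i j := fun i => by
    obtain ⟨g, hg, hi, hw⟩ := hnext i i.2
    exact ⟨⟨_, hi⟩, g, hg, rfl, hw⟩
  have h2 : ∀ i : C, ∃ j : C, R j i := fun i => by
    obtain ⟨g, hg, hi, hw⟩ := hprev i i.2
    exact ⟨⟨_, hi⟩, g, hg, by simp, hw⟩
  choose nx hnx using h1
  choose pv hpv using h2
  obtain ⟨c, hc⟩ := hC
  set p : ℤ → C := fun j => match j with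
    | Int.ofNat n => nx^[n] ⟨c, hc⟩
    | Int.negSucc n => pv^[n + 1] ⟨c, hc⟩ with hp
  have hstep : ∀ j, R (p j) (p (j + 1)) := by
    intro j
    match j with
    | Int.ofNat n =>
      have : p (Int.ofNat n + 1) = nx (p (Int.ofNat n)) := by
        change nx^[n + 1] _ = _
        rw [Function.iterate_succ_apply']
      rw [this]; exact hnx _
    | Int.negSucc 0 =>
      exact hpv ⟨c, hc⟩
    | Int.negSucc (n + 1) =>
      have : p (Int.negSucc (n + 1)) = pv (p (Int.negSucc (n + 1) + 1)) := by
        change pv^[n + 1 + 1] _ = pv (pv^[n + 1] _)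
        rw [Function.iterate_succ_apply']
      rw [this]; exact hpv _
  refine ⟨fun j => p j, isParsing_iff.2 ⟨strictMono_int_of_lt_succ fun j => ?_, fun j => ?_⟩⟩
  · obtain ⟨g, hg, hj, -⟩ := hstep j
    have := List.length_pos_iff.2 (hne g hg)
    rw [hj]; omega
  · exact hstep j

/-- The periodic point obtained by repeating the word `w`. -/
def periodicPoint (z : Fin d) (w : List (Fin d)) : FullShift d :=
  fun i => w.getD (i % w.length).toNat z

lemma window_periodicPoint (z : Fin d) (w : List (Fin d)) (q : ℤ) :
    window (periodicPoint z w) (w.length * q) w.length = w := by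
  rw [window_eq_list_iff]
  intro l hl
  have : ((w.length * q + l : ℤ) % w.length).toNat = l := by
    rw [Int.mul_add_emod_self_left, Int.emod_eq_of_lt (by omega) (by omega)]; simp
  change w.getD _ z = _
  rw [this]
  simp [hl]

lemma shift_iterate_periodicPoint (z : Fin d) (w : List (Fin d)) :
    (shift d)^[w.length] (periodicPoint z w) = periodicPoint z w := by
  ext i : 1
  simp [shift_iterate, periodicPoint]

lemma periodicPoint_mem_Xseq (hne : ∀ g ∈ 𝒢, g ≠ []) (z : Fin d) {w : List (Fin d)}
    (hw : w ≠ []) (h : IsConcat 𝒢 w) : periodicPoint z w ∈ Xseq 𝒢 := by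
  obtain ⟨L, hL, rfl⟩ := h
  set w := L.flatten with hwdef
  have hL0 : L ≠ [] := by rintro rfl; exact hw rfl
  have hwin : ∀ (q : ℤ) (L₁ L₂ : List (List (Fin d))) (g : List (Fin d)), L₁ ++ g :: L₂ = L →
      window (periodicPoint z w) (w.length * q + L₁.flatten.length) g.length = g := by
    intro q L₁ L₂ g hLL
    have hweq : w = L₁.flatten ++ (g ++ L₂.flatten) := by rw [hwdef, ← hLL]; simp
    have h1 := window_periodicPoint z w q
    have hlen : w.length = L₁.flatten.length + (g.length + L₂.flatten.length) := by
      rw [hweq]; simp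
    have h2 : window (periodicPoint z w) (w.length * q)
        (L₁.flatten.length + (g.length + L₂.flatten.length)) =
        L₁.flatten ++ (g ++ L₂.flatten) := by
      rw [← hlen, h1]; exact hweq
    rw [window_add, window_add] at h2
    exact (List.append_inj (List.append_inj h2 (by simp)).2 (by simp)).1
  refine mem_Xseq_of_chain hne (C := {i | ∃ (q : ℤ) (L₁ L₂ : List (List (Fin d))),
    L₁ ++ L₂ = L ∧ i = w.length * q + L₁.flatten.length}) ⟨0, 0, [], L, rfl, by simp⟩ ?_ ?_
  · rintro i ⟨q, L₁, L₂, hLL, rfl⟩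
    obtain ⟨q', L₁', g, L₂', hLL', hi⟩ : ∃ (q' : ℤ) (L₁' : List (List (Fin d)))
        (g : List (Fin d)) (L₂' : List (List (Fin d))), L₁' ++ g :: L₂' = L ∧
        (w.length * q + L₁.flatten.length : ℤ) = w.length * q' + L₁'.flatten.length := by
      cases L₂ with
      | cons g L₂ => exact ⟨q, L₁, g, L₂, hLL, rfl⟩
      | nil =>
        obtain ⟨g, L', rfl⟩ := List.exists_cons_of_ne_nil hL0
        refine ⟨q + 1, [], g, L', rfl, ?_⟩
        rw [List.append_nil] at hLL
        rw [hLL, ← hwdef]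
        simp [mul_add]
    rw [hi]
    refine ⟨g, hL g (by simp [← hLL']), ⟨q', L₁' ++ [g], L₂', by simpa using hLL', ?_⟩,
      hwin q' L₁' L₂' g hLL'⟩
    simp [add_assoc]
  · rintro i ⟨q, L₁, L₂, hLL, rfl⟩
    obtain ⟨q', L₁', g, L₂', hLL', hi⟩ : ∃ (q' : ℤ) (L₁' : List (List (Fin d)))
        (g : List (Fin d)) (L₂' : List (List (Fin d))), L₁' ++ g :: L₂' = L ∧
        (w.length * q + L₁.flatten.length : ℤ) =
          w.length * q' + L₁'.flatten.length + g.length := by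
      rcases List.eq_nil_or_concat' L₁ with rfl | ⟨L₁', g, rfl⟩
      · rcases List.eq_nil_or_concat' L with h | ⟨L', g, hL'⟩
        · exact absurd h hL0
        · refine ⟨q - 1, L', g, [], hL'.symm, ?_⟩
          have : w.length = L'.flatten.length + g.length := by rw [hwdef, hL']; simp
          rw [add_assoc, ← Nat.cast_add, ← this]
          simp [mul_sub]
      · exact ⟨q, L₁', g, L₂, by simpa using hLL, by simp [add_assoc]⟩
    rw [hi]
    refine ⟨g, hL g (by simp [← hLL']), ⟨q', L₁', g :: L₂', hLL', by simp⟩, ?_⟩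
    rw [add_sub_cancel_right]
    exact hwin q' L₁' L₂' g hLL'

lemma Xseq_nonempty (hne : ∀ g ∈ 𝒢, g ≠ []) (h : 𝒢.Nonempty) :
    (Xseq 𝒢).Nonempty := by
  obtain ⟨g, hg⟩ := h
  obtain ⟨z, -⟩ := List.exists_mem_of_ne_nil g (hne g hg)
  exact ⟨_, periodicPoint_mem_Xseq hne z (hne g hg) ⟨[g], by simpa using hg, by simp⟩⟩

end CodedShift

section PartitionFunctions

variable {d : ℕ}

open Classical in
/-- The contribution of the word `w` to the partition function of `X`. -/
def wordWeight (X : Set (FullShift d)) (ψ : FullShift d → ℝ) (w : List (Fin d)) : ℝ :=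
  if (X ∩ {x | window x 0 w.length = w}).Nonempty then
    Real.exp (sSup (birkhoff ψ w.length '' (X ∩ {x | window x 0 w.length = w}))) else 0

lemma Zfun_eq_sum (X : Set (FullShift d)) (ψ : FullShift d → ℝ) (n : ℕ) :
    Zfun X ψ n = ∑ w ∈ words d n, wordWeight X ψ w := by
  rw [sum_words, Zfun]
  refine Finset.sum_congr rfl fun w _ => ?_
  have h : {x | window x 0 (List.ofFn w).length = List.ofFn w} = cyl w := by
    ext x; rw [mem_cyl_iff, Set.mem_ofPred_eq, List.length_ofFn]
  rw [wordWeight, h, List.length_ofFn]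

lemma wordWeight_nonneg (X : Set (FullShift d)) (ψ : FullShift d → ℝ) (w : List (Fin d)) :
    0 ≤ wordWeight X ψ w := by
  unfold wordWeight
  split_ifs <;> positivity

lemma exp_birkhoff_le_wordWeight {X : Set (FullShift d)} {ψ : FullShift d → ℝ} {K : ℝ}
    (hK : ∀ x, |ψ x| ≤ K) {w : List (Fin d)} {x : FullShift d} (hx : x ∈ X)
    (hxw : window x 0 w.length = w) : Real.exp (birkhoff ψ w.length x) ≤ wordWeight X ψ w := by
  rw [wordWeight, if_pos ⟨x, hx, hxw⟩]
  exact Real.exp_le_exp.2 (le_csSup (bddAbove_birkhoff hK _ _) ⟨x, ⟨hx, hxw⟩, rfl⟩)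

lemma wordWeight_le {X : Set (FullShift d)} {ψ : FullShift d → ℝ} {w : List (Fin d)} {B : ℝ}
    (hB : 0 ≤ B)
    (h : ∀ x ∈ X, window x 0 w.length = w → Real.exp (birkhoff ψ w.length x) ≤ B) :
    wordWeight X ψ w ≤ B := by
  unfold wordWeight
  split_ifs with hne
  · obtain ⟨x, hx, hxw⟩ := hne
    have hBpos : 0 < B := (Real.exp_pos _).trans_le (h x hx hxw)
    rw [← Real.le_log_iff_exp_le hBpos]
    refine csSup_le ⟨_, x, ⟨hx, hxw⟩, rfl⟩ ?_
    rintro _ ⟨y, ⟨hy, hyw⟩, rfl⟩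
    exact (Real.le_log_iff_exp_le hBpos).2 (h y hy hyw)
  · exact hB

lemma birkhoff_add (ψ : FullShift d → ℝ) (k l : ℕ) (x : FullShift d) :
    birkhoff ψ (k + l) x = birkhoff ψ k x + birkhoff ψ l ((shift d)^[k] x) := by
  simp only [birkhoff, Finset.sum_range_add, ← Function.iterate_add_apply]
  congr 1
  exact Finset.sum_congr rfl fun i _ => by rw [add_comm]

lemma birkhoff_le_add {X : Set (FullShift d)} (hinv : ∀ x ∈ X, shift d x ∈ X)
    {φ ψ : FullShift d → ℝ} {ε : ℝ} (h : ∀ x ∈ X, φ x ≤ ψ x + ε) (n : ℕ) {x : FullShift d}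
    (hx : x ∈ X) : birkhoff φ n x ≤ birkhoff ψ n x + n * ε := by
  have : ∑ k ∈ Finset.range n, φ ((shift d)^[k] x) ≤
      ∑ k ∈ Finset.range n, (ψ ((shift d)^[k] x) + ε) :=
    Finset.sum_le_sum fun k _ => h _ (shift_iterate_mem hinv hx k)
  simpa [birkhoff, Finset.sum_add_distrib] using this

lemma pressure_congr {X : Set (FullShift d)} (hinv : ∀ x ∈ X, shift d x ∈ X)
    {φ ψ : FullShift d → ℝ} (h : ∀ x ∈ X, φ x = ψ x) : pressure X φ = pressure X ψ := by
  have : ∀ n, Zfun X φ n = Zfun X ψ n := by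
    intro n
    refine Finset.sum_congr rfl fun w _ => ?_
    have : birkhoff φ n '' (X ∩ cyl w) = birkhoff ψ n '' (X ∩ cyl w) :=
      Set.image_congr fun x hx => Finset.sum_congr rfl fun k _ =>
        h _ (shift_iterate_mem hinv hx.1 k)
    rw [this]
  simp only [pressure, this]

lemma le_pressure {X : Set (FullShift d)} {ψ : FullShift d → ℝ} {c : ℝ}
    (h : ∀ n : ℕ, 0 < n → n * c ≤ Real.log (Zfun X ψ n)) : c ≤ pressure X ψ := by
  refine le_ciInf fun n => ?_
  have := h (n + 1) n.succ_pos
  rw [one_div, ← div_eq_inv_mul, le_div_iff₀ (by positivity)]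
  push_cast at this
  linarith

lemma pressure_le_add {X Y : Set (FullShift d)} (hXY : X ⊆ Y) (hX : X.Nonempty)
    (hinv : ∀ x ∈ X, shift d x ∈ X) {φ ψ : FullShift d → ℝ} {K K' ε : ℝ}
    (hφ : ∀ x, |φ x| ≤ K) (hψ : ∀ x, |ψ x| ≤ K') (h : ∀ x ∈ X, φ x ≤ ψ x + ε) :
    pressure X φ ≤ pressure Y ψ + ε := by
  rw [← sub_le_iff_le_add]
  refine le_pressure fun n hn => ?_
  have h1 := pressure_le_log_Zfun hX hφ hn
  have h2 : Zfun X φ n ≤ Real.exp (n * ε) * Zfun Y ψ n := by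
    rw [Zfun_eq_sum, Zfun_eq_sum, Finset.mul_sum]
    refine Finset.sum_le_sum fun w hw => ?_
    have hw' := mem_words.1 hw
    refine wordWeight_le (mul_nonneg (Real.exp_pos _).le (wordWeight_nonneg _ _ _))
      fun x hx hxw => ?_
    calc _ ≤ Real.exp (n * ε) * Real.exp (birkhoff ψ w.length x) := by
          rw [← Real.exp_add, hw']
          exact Real.exp_le_exp.2 (by linarith [birkhoff_le_add hinv h n hx])
      _ ≤ _ := mul_le_mul_of_nonneg_left (exp_birkhoff_le_wordWeight hψ (hXY hx) hxw)
          (Real.exp_pos _).le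
  have h3 := Real.log_le_log (Zfun_pos hX φ n) h2
  rw [Real.log_mul (Real.exp_pos _).ne' (Zfun_pos (hX.mono hXY) ψ n).ne', Real.log_exp] at h3
  rw [mul_sub]
  linarith

lemma Zfun_add_le {X : Set (FullShift d)} (hinv : ∀ x ∈ X, shift d x ∈ X) {ψ : FullShift d → ℝ}
    {K : ℝ} (hK : ∀ x, |ψ x| ≤ K) (k l : ℕ) :
    Zfun X ψ (k + l) ≤ Zfun X ψ k * Zfun X ψ l := by
  rw [Zfun_eq_sum, Zfun_eq_sum, Zfun_eq_sum, sum_words_add, Finset.sum_mul_sum]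
  refine Finset.sum_le_sum fun u hu => Finset.sum_le_sum fun v hv => ?_
  refine wordWeight_le (mul_nonneg (wordWeight_nonneg _ _ _) (wordWeight_nonneg _ _ _))
    fun x hx hxw => ?_
  rw [List.length_append, window_add] at hxw
  obtain ⟨h1, h2⟩ := List.append_inj hxw (by simp)
  rw [List.length_append, birkhoff_add, Real.exp_add]
  refine mul_le_mul (exp_birkhoff_le_wordWeight hK hx h1)
    (exp_birkhoff_le_wordWeight hK (shift_iterate_mem hinv hx _) ?_) (Real.exp_pos _).le
    (wordWeight_nonneg _ _ _)
  rwa [window_shift]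

lemma Zfun_mul_le {X : Set (FullShift d)} (hX : X.Nonempty) (hinv : ∀ x ∈ X, shift d x ∈ X)
    {ψ : FullShift d → ℝ} {K : ℝ} (hK : ∀ x, |ψ x| ≤ K) (n : ℕ) {r : ℕ} (hr : 0 < r) :
    Zfun X ψ (n * r) ≤ Zfun X ψ n ^ r := by
  induction r, hr using Nat.le_induction with
  | base => simp
  | succ r _ ih =>
    rw [mul_add, mul_one, pow_succ]
    exact (Zfun_add_le hinv hK _ _).trans
      (mul_le_mul_of_nonneg_right ih (Zfun_pos hX ψ n).le)

lemma concatSum_le_Zfun (z : Fin d) {S : Set (List (Fin d))} (hne : ∀ g ∈ S, g ≠ [])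
    {ψ : FullShift d → ℝ}
    {K D₀ : ℝ} (hK : ∀ x, |ψ x| ≤ K) {s : List (Fin d) → ℝ}
    (hs : ∀ w x, window x 0 w.length = w → s w ≤ birkhoff ψ w.length x + D₀) {n : ℕ}
    (hn : 0 < n) : concatSum S s n ≤ Real.exp D₀ * Zfun (codedShift S) ψ n := by
  classical
  rw [concatSum, Finset.sum_filter, Zfun_eq_sum, Finset.mul_sum]
  refine Finset.sum_le_sum fun w hw => ?_
  split_ifs with hc
  · have hw0 : w ≠ [] := by
      rintro rfl; simp [mem_words] at hw; omega
    have hper := window_periodicPoint z w 0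
    rw [mul_zero] at hper
    refine le_trans ?_ (mul_le_mul_of_nonneg_left (exp_birkhoff_le_wordWeight hK
      (subset_closure (periodicPoint_mem_Xseq hne z hw0 hc)) hper) (Real.exp_pos _).le)
    rw [← Real.exp_add]
    exact Real.exp_le_exp.2 (by linarith [hs w _ hper])
  · exact mul_nonneg (Real.exp_pos _).le (wordWeight_nonneg _ _ _)

lemma concatSum_le (z : Fin d) {S : Set (List (Fin d))} (hS : S.Nonempty)
    (hne : ∀ g ∈ S, g ≠ [])
    {ψ : FullShift d → ℝ} {K D₀ D : ℝ} (hD₀ : 0 ≤ D₀) (hD : 0 ≤ D) (hK : ∀ x, |ψ x| ≤ K)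
    {s : List (Fin d) → ℝ} (hs0 : s [] = 0)
    (hsb : ∀ w x, window x 0 w.length = w → s w ≤ birkhoff ψ w.length x + D₀)
    (hs : ∀ u v, |s (u ++ v) - s u - s v| ≤ D) (k : ℕ) :
    concatSum S s k ≤ Real.exp (D₀ + D) * Real.exp (k * pressure (codedShift S) ψ) := by
  classical
  have hX : (codedShift S).Nonempty := (Xseq_nonempty hne hS).closure
  have hinv : ∀ x ∈ codedShift S, shift d x ∈ codedShift S := fun x hx => shift_mem_codedShift hx
  rcases Nat.eq_zero_or_pos k with rfl | hk
  · have h1 : concatSum S s 0 ≤ 1 := by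
      rw [concatSum, Finset.sum_filter, sum_words]
      simp only [List.ofFn_zero, hs0]
      simp only [Finset.univ_unique, Finset.sum_singleton]
      split_ifs <;> simp
    refine h1.trans ?_
    rw [Nat.cast_zero, zero_mul, Real.exp_zero, mul_one]
    exact Real.one_le_exp (by linarith)
  rcases (concatSum_nonneg S s k).eq_or_lt with h0 | hpos
  · rw [← h0]; positivity
  rw [← Real.exp_add, ← Real.log_le_iff_le_exp hpos, ← sub_le_iff_le_add',
    ← div_le_iff₀' (by exact_mod_cast hk)]
  refine le_pressure fun n hn => ?_
  obtain ⟨r, rfl⟩ := Nat.exists_eq_succ_of_ne_zero hn.ne'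
  have h1 := concatSum_pow_le hs k r (S := S)
  have h2 := concatSum_le_Zfun z hne hK hsb (n := k * (r + 1)) (by positivity)
  have h3 := Zfun_mul_le hX hinv hK (r + 1) hk
  rw [mul_comm (r + 1) k] at h3
  have h4 : concatSum S s k ^ (r + 1) ≤
      Real.exp (D * r + D₀) * Zfun (codedShift S) ψ (r + 1) ^ k := by
    refine h1.trans ?_
    rw [Real.exp_add, mul_assoc]
    exact mul_le_mul_of_nonneg_left
      (h2.trans (mul_le_mul_of_nonneg_left h3 (Real.exp_pos _).le)) (Real.exp_pos _).le
  have hZ := Zfun_pos hX ψ (r + 1)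
  have h5 := Real.log_le_log (pow_pos hpos _) h4
  rw [Real.log_pow, Real.log_mul (Real.exp_pos _).ne' (pow_pos hZ _).ne', Real.log_exp,
    Real.log_pow] at h5
  have hk' : (0 : ℝ) < k := by exact_mod_cast hk
  rw [mul_div_assoc', div_le_iff₀ hk', Nat.succ_eq_add_one]
  push_cast at h5 ⊢
  nlinarith [mul_nonneg hD₀ (Nat.cast_nonneg (α := ℝ) r)]

end PartitionFunctions

section Parsings

variable {d : ℕ} {𝒢 S : Set (List (Fin d))}

lemma sub_le_of_strictMono {p : ℤ → ℤ} (hp : StrictMono p) {j k : ℤ} (h : j ≤ k) :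
    k - j ≤ p k - p j := by
  induction k, h using Int.leInduction with
  | base => simp
  | succ k _ ih =>
    have := hp (lt_add_one k)
    omega

lemma exists_le_lt_of_strictMono {p : ℤ → ℤ} (hp : StrictMono p) (i : ℤ) :
    ∃ j, p j ≤ i ∧ i < p (j + 1) := by
  obtain ⟨j, hj, hmax⟩ := Int.exists_greatest_of_bdd (P := fun j => p j ≤ i)
    ⟨max 0 (i - p 0), fun k hk => by
      by_contra! hlt
      have := sub_le_of_strictMono hp (j := 0) (k := k) (by omega)
      omega⟩
    ⟨min 0 (i - p 0), by
      have := sub_le_of_strictMono hp (min_le_left 0 (i - p 0))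
      omega⟩
  refine ⟨j, hj, ?_⟩
  by_contra! hlt
  have := hmax _ hlt
  omega

lemma eq_of_range_eq {p q : ℤ → ℤ} (hp : StrictMono p) (hq : StrictMono q)
    (h : Set.range p = Set.range q) {i : ℤ} (hp0 : p 0 ≤ i) (hp1 : i < p 1) (hq0 : q 0 ≤ i)
    (hq1 : i < q 1) : p = q := by
  have hpq : ∀ j, ∃ k, q k = p j := fun j => by
    have : p j ∈ Set.range q := h ▸ Set.mem_range_self j
    exact this
  have hqp : ∀ j, ∃ k, p k = q j := fun j => by
    have : q j ∈ Set.range p := h ▸ Set.mem_range_self j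
    exact this
  have key : ∀ {p q : ℤ → ℤ}, StrictMono p → StrictMono q → (∀ j, ∃ k, q k = p j) → p 0 ≤ i →
      i < q 1 → p 0 ≤ q 0 := by
    intro p q _ hq hpq hp0 hq1
    obtain ⟨k, hk⟩ := hpq 0
    rw [← hk]
    refine hq.monotone ?_
    by_contra! hlt
    have := hq.monotone (show (1 : ℤ) ≤ k by omega)
    omega
  have h0 : p 0 = q 0 := le_antisymm (key hp hq hpq hp0 hq1) (key hq hp hqp hq0 hp1)
  have up : ∀ {p q : ℤ → ℤ}, StrictMono p → StrictMono q → (∀ j, ∃ k, q k = p j) → ∀ j,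
      p j = q j → q (j + 1) ≤ p (j + 1) := by
    intro p q hp hq hpq j hj
    obtain ⟨k, hk⟩ := hpq (j + 1)
    rw [← hk]
    refine hq.monotone ?_
    have : q j < q k := by rw [hk, ← hj]; exact hp (lt_add_one j)
    exact hq.lt_iff_lt.1 this
  have down : ∀ {p q : ℤ → ℤ}, StrictMono p → StrictMono q → (∀ j, ∃ k, q k = p j) → ∀ j,
      p j = q j → p (j - 1) ≤ q (j - 1) := by
    intro p q hp hq hpq j hj
    obtain ⟨k, hk⟩ := hpq (j - 1)
    rw [← hk]
    refine hq.monotone ?_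
    have : q k < q j := by rw [hk, ← hj]; exact hp (by omega)
    have := hq.lt_iff_lt.1 this
    omega
  ext j
  induction j using Int.induction_on with
  | zero => exact h0
  | succ j ih => exact le_antisymm (up hq hp hqp _ ih.symm) (up hp hq hpq _ ih)
  | pred j ih => exact le_antisymm (down hp hq hpq _ ih) (down hq hp hqp _ ih.symm)

/-- `x` has a parsing for which position `i` lies in a block from `S`. -/
def GoodAt (𝒢 S : Set (List (Fin d))) (x : FullShift d) (i : ℤ) : Prop :=
  ∃ p : ℤ → ℤ, IsParsing 𝒢 x p ∧ p 0 ≤ i ∧ i < p 1 ∧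
    ∃ g ∈ S, p 1 = p 0 + g.length ∧ window x (p 0) g.length = g

/-- The points having a parsing for which the position `0` lies in a block from `S`. -/
def goodSet (𝒢 S : Set (List (Fin d))) : Set (FullShift d) := {x | GoodAt 𝒢 S x 0}

lemma goodAt_iff_shift_mem (x : FullShift d) (k : ℕ) :
    (shift d)^[k] x ∈ goodSet 𝒢 S ↔ GoodAt 𝒢 S x k := by
  simp only [goodSet, Set.mem_ofPred_eq, GoodAt]
  constructor
  · rintro ⟨p, hp, h0, h1, g, hg, hpg, hw⟩
    refine ⟨fun j => p j + k, (isParsing_shift_iterate k).1 (by simpa using hp), by dsimp only; omega,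
      by dsimp only; omega, g, hg, by dsimp only; omega, ?_⟩
    rwa [window_shift] at hw
  · rintro ⟨p, hp, h0, h1, g, hg, hpg, hw⟩
    refine ⟨fun j => p j - k, (isParsing_shift_iterate k).2 hp, by dsimp only; omega,
      by dsimp only; omega, g, hg, by dsimp only; omega, ?_⟩
    rw [window_shift]
    simpa using hw

lemma IsParsing.reindex {x : FullShift d} {p : ℤ → ℤ} (hp : IsParsing 𝒢 x p) (j : ℤ) :
    IsParsing 𝒢 x (fun i => p (i + j)) := by
  refine ⟨fun a b hab => hp.1 (by simpa using hab), fun i => ?_⟩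
  have := hp.2 (i + j)
  rwa [add_right_comm] at this

lemma goodSet_self : goodSet 𝒢 𝒢 = Xseq 𝒢 := by
  ext x
  constructor
  · rintro ⟨p, hp, -⟩
    exact ⟨p, hp⟩
  · rintro ⟨p, hp⟩
    obtain ⟨j, h0, h1⟩ := exists_le_lt_of_strictMono hp.1 0
    refine ⟨_, hp.reindex j, by simpa using h0, by rwa [add_comm 1 j], ?_⟩
    exact (isParsing_iff.1 (hp.reindex j)).2 0

lemma measurableSet_goodSet (hU : UniqueRep 𝒢) (S : Set (List (Fin d))) :
    MeasurableSet (goodSet 𝒢 S) := by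
  set N : Set (FullShift d × (ℤ → ℤ)) := {q | (∀ j, q.2 j < q.2 (j + 1)) ∧
    (∀ j : ℤ, ∃ (g : List (Fin d)) (i : ℤ), g ∈ 𝒢 ∧ q.2 j = i ∧ q.2 (j + 1) = i + g.length ∧
      ∀ (l : ℕ) (hl : l < g.length), q.1 (i + l) = g[l]) ∧ q.2 0 ≤ 0 ∧ 0 < q.2 1 ∧
    ∃ (g : List (Fin d)) (i : ℤ), g ∈ S ∧ q.2 0 = i ∧ q.2 1 = i + g.length ∧
      ∀ (l : ℕ) (hl : l < g.length), q.1 (i + l) = g[l]} with hN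
  have hP : ∀ (j : ℤ), Measurable fun q : FullShift d × (ℤ → ℤ) => q.2 j := fun j =>
    (measurable_pi_apply j).comp measurable_snd
  have hX : ∀ (j : ℤ), Measurable fun q : FullShift d × (ℤ → ℤ) => q.1 j := fun j =>
    (measurable_pi_apply j).comp measurable_fst
  have hblock : ∀ (T : Set (List (Fin d))) (j k : ℤ), Measurable fun q : FullShift d × (ℤ → ℤ) =>
      ∃ (g : List (Fin d)) (i : ℤ), g ∈ T ∧ q.2 j = i ∧ q.2 k = i + g.length ∧
      ∀ (l : ℕ) (hl : l < g.length), q.1 (i + l) = g[l] := by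
    intro T j k
    refine Measurable.exists fun g => Measurable.exists fun i => measurable_const.and ?_
    refine Measurable.and (measurableSet_setOfPred.1 (hP j (measurableSet_singleton i))) ?_
    refine Measurable.and (measurableSet_setOfPred.1 (hP k (measurableSet_singleton (i + g.length)))) ?_
    refine Measurable.forall fun l => Measurable.forall fun hl => ?_
    exact measurableSet_setOfPred.1 (hX (i + l) (measurableSet_singleton g[l]))
  have hNm : MeasurableSet N := by
    rw [hN, measurableSet_setOfPred]
    refine Measurable.and (Measurable.forall fun j => ?_) (Measurable.and
      (Measurable.forall fun j => hblock _ _ _) (Measurable.and ?_ (Measurable.and ?_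
        (hblock _ _ _))))
    · exact measurableSet_setOfPred.1 (measurableSet_lt (hP j) (hP (j + 1)))
    · exact measurableSet_setOfPred.1 (measurableSet_le (hP 0) measurable_const)
    · exact measurableSet_setOfPred.1 (measurableSet_lt measurable_const (hP 1))
  have hNpar : ∀ q ∈ N, IsParsing 𝒢 q.1 q.2 := by
    rintro q ⟨h1, h2, -⟩
    refine ⟨strictMono_int_of_lt_succ h1, fun j => ?_⟩
    obtain ⟨g, i, hg, rfl, h⟩ := h2 j
    exact ⟨g, hg, h⟩
  have himage : goodSet 𝒢 S = Prod.fst '' N := by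
    ext x
    constructor
    · rintro ⟨p, hp, h0, h1, g, hg, hpg, hw⟩
      refine ⟨(x, p), ⟨fun j => hp.1 (lt_add_one j), fun j => ?_, h0, h1, g, p 0, hg, rfl, hpg,
        (window_eq_list_iff _ _ _).1 hw⟩, rfl⟩
      obtain ⟨g, hg, h⟩ := hp.2 j
      exact ⟨g, p j, hg, rfl, h⟩
    · rintro ⟨q, hq, rfl⟩
      have hpar := hNpar q hq
      obtain ⟨-, -, h0, h1, g, i, hg, rfl, hpg, hw⟩ := hq
      exact ⟨q.2, hpar, h0, h1, g, hg, hpg, (window_eq_list_iff _ _ _).2 hw⟩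
  rw [himage]
  refine hNm.image_of_measurable_injOn measurable_fst ?_
  rintro ⟨x, p⟩ hq ⟨x', p'⟩ hq' (rfl : x = x')
  have hp := hNpar _ hq
  have hp' := hNpar _ hq'
  obtain ⟨-, -, h0, h1, -⟩ := hq
  obtain ⟨-, -, h0', h1', -⟩ := hq'
  rw [Prod.mk.injEq]
  exact ⟨rfl, eq_of_range_eq hp.1 hp'.1 (hU x p p' hp hp') h0 h1 h0' h1'⟩

lemma measurableSet_Xseq (hU : UniqueRep 𝒢) : MeasurableSet (Xseq 𝒢) :=
  goodSet_self (𝒢 := 𝒢) ▸ measurableSet_goodSet hU 𝒢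

lemma GoodAt.mem_of_isParsing (hU : UniqueRep 𝒢) {x : FullShift d} {p : ℤ → ℤ}
    (hp : IsParsing 𝒢 x p) {j i : ℤ} (h0 : p j ≤ i) (h1 : i < p (j + 1)) (h : GoodAt 𝒢 S x i)
    {g : List (Fin d)} (hg : p (j + 1) = p j + g.length) (hw : window x (p j) g.length = g) :
    g ∈ S := by
  obtain ⟨q, hq, hq0, hq1, g', hg', hqg, hqw⟩ := h
  have hpj := hp.reindex j
  have := eq_of_range_eq hpj.1 hq.1 (hU x _ _ hpj hq) (by simpa using h0)
    (by rwa [add_comm 1 j]) hq0 hq1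
  have e0 : p j = q 0 := by rw [← this]; simp
  have e1 : p (j + 1) = q 1 := by rw [← this, add_comm]
  have hlen : g.length = g'.length := by omega
  rw [e0, hlen, hqw] at hw
  exact hw ▸ hg'

lemma monotone_goodSet {G : ℕ → List (Fin d)} : Monotone fun m : ℕ =>
    goodSet (Set.range G) (G '' {i | i < m}) := by
  rintro a b hab x ⟨p, hp, h0, h1, g, ⟨i, hi, rfl⟩, h⟩
  exact ⟨p, hp, h0, h1, G i, ⟨i, lt_of_lt_of_le hi hab, rfl⟩, h⟩

lemma iUnion_goodSet {G : ℕ → List (Fin d)} :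
    ⋃ m : ℕ, goodSet (Set.range G) (G '' {i | i < m}) = Xseq (Set.range G) := by
  rw [← goodSet_self]
  ext x
  simp only [Set.mem_iUnion]
  constructor
  · rintro ⟨m, p, hp, h0, h1, g, ⟨i, -, rfl⟩, h⟩
    exact ⟨p, hp, h0, h1, G i, ⟨i, rfl⟩, h⟩
  · rintro ⟨p, hp, h0, h1, g, ⟨i, rfl⟩, h⟩
    exact ⟨i + 1, p, hp, h0, h1, G i, ⟨i, Nat.lt_succ_self i, rfl⟩, h⟩

open Classical in
lemma badCount_window_le_of_block (hU : UniqueRep 𝒢) {ℓ : ℕ} (hℓ : ∀ g ∈ S, g.length ≤ ℓ)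
    {x : FullShift d} {p : ℤ → ℤ} (hp : IsParsing 𝒢 x p) {j a : ℤ} {L : ℕ} (h0 : p j ≤ a)
    (h1 : a + L ≤ p (j + 1)) :
    badCount S (window x a L) ≤
      (∑ k ∈ Finset.range L, if GoodAt 𝒢 S x (a + k) then 0 else 1) + ℓ := by
  obtain ⟨g, hg, hpg, hw⟩ := (isParsing_iff.1 hp).2 j
  have hb := badCount_le_length S (window x a L)
  rw [length_window] at hb
  by_cases hgS : g ∈ S
  · have := hℓ g hgS
    omega
  · refine hb.trans (le_add_right (le_of_eq ?_))
    have hbad : ∀ k ∈ Finset.range L, (if GoodAt 𝒢 S x (a + k) then 0 else 1) = 1 := by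
      intro k hk
      have := Finset.mem_range.1 hk
      exact if_neg fun h => hgS (h.mem_of_isParsing hU hp (j := j) (by omega) (by omega) hpg hw)
    rw [Finset.sum_congr rfl hbad]
    simp

open Classical in
lemma badCount_window_le_of_cut (hU : UniqueRep 𝒢) {ℓ : ℕ} (hℓ : ∀ g ∈ S, g.length ≤ ℓ)
    {x : FullShift d} {p : ℤ → ℤ} (hp : IsParsing 𝒢 x p) (L : ℕ) (j : ℤ) :
    badCount S (window x (p j) L) ≤
      (∑ k ∈ Finset.range L, if GoodAt 𝒢 S x (p j + k) then 0 else 1) + ℓ := by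
  induction L using Nat.strong_induction_on generalizing j with
  | _ L ih =>
    obtain ⟨g, hg, hpg, hw⟩ := (isParsing_iff.1 hp).2 j
    rcases lt_or_ge L g.length with hL | hL
    · exact badCount_window_le_of_block hU hℓ hp le_rfl (by omega)
    obtain ⟨r, rfl⟩ := Nat.exists_eq_add_of_le hL
    have hlt := hp.1 (lt_add_one j)
    have h2 := ih r (by omega) (j + 1)
    rw [window_add, hw, ← hpg, Finset.sum_range_add]
    refine (badCount_append_le S _ _).trans ?_
    have h1 : badCount S g ≤
        ∑ k ∈ Finset.range g.length, if GoodAt 𝒢 S x (p j + k) then 0 else 1 := by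
      by_cases hgS : g ∈ S
      · rw [badCount_eq_zero hgS]; exact Nat.zero_le _
      · refine (badCount_le_length S g).trans (le_of_eq ?_)
        have hbad : ∀ k ∈ Finset.range g.length,
            (if GoodAt 𝒢 S x (p j + k) then 0 else 1) = 1 := by
          intro k hk
          have := Finset.mem_range.1 hk
          exact if_neg fun h => hgS
            (h.mem_of_isParsing hU hp (j := j) (by omega) (by omega) hpg hw)
        rw [Finset.sum_congr rfl hbad]
        simp
    have h3 : ∀ k : ℕ, p j + ((g.length + k : ℕ) : ℤ) = p (j + 1) + k := fun k => by
      push_cast; omega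
    simp only [h3]
    omega

open Classical in
lemma badCount_window_le (hU : UniqueRep 𝒢) {ℓ : ℕ} (hℓ : ∀ g ∈ S, g.length ≤ ℓ)
    {x : FullShift d} (hx : x ∈ Xseq 𝒢) (n : ℕ) :
    badCount S (window x 0 n) ≤
      (∑ k ∈ Finset.range n, if (shift d)^[k] x ∈ goodSet 𝒢 S then 0 else 1) + 2 * ℓ := by
  simp only [goodAt_iff_shift_mem]
  obtain ⟨p, hp⟩ := hx
  obtain ⟨j, h0, h1⟩ := exists_le_lt_of_strictMono hp.1 0
  rcases le_or_gt (n : ℤ) (p (j + 1)) with hn | hn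
  · have := badCount_window_le_of_block hU hℓ hp h0 (L := n) (by omega)
    simp only [zero_add] at this
    omega
  obtain ⟨r, hr⟩ := Int.eq_ofNat_of_zero_le h1.le
  obtain ⟨t, rfl⟩ := Nat.exists_eq_add_of_le (show r ≤ n by omega)
  have h2 := badCount_window_le_of_block hU hℓ hp h0 (L := r) (by omega)
  have h3 := badCount_window_le_of_cut hU hℓ hp t (j + 1)
  rw [hr] at h3
  simp only [zero_add] at h2
  rw [window_add, zero_add, Finset.sum_range_add]
  refine (badCount_append_le S _ _).trans ?_
  push_cast
  omega

end Parsings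

section Distortion

variable {d : ℕ}

/-- Birkhoff sums of `ψ` over orbit segments with the same coding differ by at most `D₀`. -/
def HasDistortion (ψ : FullShift d → ℝ) (D₀ : ℝ) : Prop :=
  ∀ (n : ℕ) (x y : FullShift d), window x 0 n = window y 0 n →
    |birkhoff ψ n x - birkhoff ψ n y| ≤ D₀

/-- Replace all letters outside of `[-M, M]` by `z`. -/
def truncate (z : Fin d) (M : ℕ) (x : FullShift d) : FullShift d :=
  fun i => if |i| ≤ M then x i else z

lemma continuous_truncate (z : Fin d) (M : ℕ) : Continuous (truncate z M) := by
  refine continuous_pi fun i => ?_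
  by_cases h : |i| ≤ M
  · simpa [truncate, h] using continuous_apply i
  · simpa [truncate, h] using continuous_const

lemma exists_truncate_close (z : Fin d) {ψ : FullShift d → ℝ} (hψ : Continuous ψ) {η : ℝ}
    (hη : 0 < η) : ∃ M : ℕ, ∀ x, |ψ x - ψ (truncate z M x)| ≤ η := by
  by_contra! h
  choose x hx using h
  set U : Ultrafilter ℕ := Ultrafilter.of atTop
  have hU : (U : Filter ℕ) ≤ atTop := Ultrafilter.of_le atTop
  obtain ⟨y, -, hy⟩ := isCompact_univ.ultrafilter_le_nhds (U.map x) (by simp)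
  have hxy : Tendsto x U (𝓝 y) := hy
  have hty : Tendsto (fun M => truncate z M (x M)) U (𝓝 y) := by
    rw [tendsto_pi_nhds] at hxy ⊢
    intro i
    refine (hxy i).congr' ?_
    filter_upwards [hU (eventually_ge_atTop i.natAbs)] with M hM
    have : |i| ≤ M := by rw [Int.abs_eq_natAbs]; exact_mod_cast hM
    simp [truncate, this]
  have h1 := ((hψ.tendsto y).comp hxy).sub ((hψ.tendsto y).comp hty)
  rw [sub_self] at h1
  have h2 := h1.abs
  rw [abs_zero] at h2
  obtain ⟨M, hM⟩ := (h2.eventually (gt_mem_nhds hη)).exists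
  exact absurd (hx M) (not_lt.2 hM.le)

lemma hasDistortion_truncate (z : Fin d) (M : ℕ) {ψ : FullShift d → ℝ} {K : ℝ} (hK0 : 0 ≤ K)
    (hK : ∀ x, |ψ x| ≤ K) :
    HasDistortion (fun x => ψ (truncate z M x)) (2 * M * (2 * K)) := by
  classical
  intro n x y hxy
  rw [window_eq_iff] at hxy
  rw [birkhoff, birkhoff, ← Finset.sum_sub_distrib]
  refine (Finset.abs_sum_le_sum_abs _ _).trans ?_
  set T := (Finset.range n).filter fun k => ¬ (M ≤ k ∧ k + M < n) with hT
  have hterm : ∀ k ∈ Finset.range n, |ψ (truncate z M ((shift d)^[k] x)) -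
      ψ (truncate z M ((shift d)^[k] y))| ≤ if ¬ (M ≤ k ∧ k + M < n) then 2 * K else 0 := by
    intro k hk
    by_cases h : M ≤ k ∧ k + M < n
    · have : truncate z M ((shift d)^[k] x) = truncate z M ((shift d)^[k] y) := by
        ext i : 1
        simp only [truncate, shift_iterate]
        split_ifs with hi
        · rw [abs_le] at hi
          have := hxy (i + k).toNat (by omega)
          rw [Int.toNat_of_nonneg (by omega)] at this
          simpa using this
        · rfl
      simp [this, h]
    · rw [if_pos h]
      have h1 := abs_sub (ψ (truncate z M ((shift d)^[k] x))) (ψ (truncate z M ((shift d)^[k] y)))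
      have h2 := hK (truncate z M ((shift d)^[k] x))
      have h3 := hK (truncate z M ((shift d)^[k] y))
      linarith
  refine (Finset.sum_le_sum hterm).trans ?_
  rw [← Finset.sum_filter, Finset.sum_const, nsmul_eq_mul]
  refine mul_le_mul_of_nonneg_right ?_ (by positivity)
  have hsub : T ⊆ Finset.range M ∪ Finset.Ico (n - M) n := by
    intro k hk
    simp only [hT, Finset.mem_filter, Finset.mem_range, Finset.mem_union, Finset.mem_Ico] at hk ⊢
    omega
  have hcard := (Finset.card_le_card hsub).trans (Finset.card_union_le _ _)
  rw [Finset.card_range, Nat.card_Ico] at hcard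
  have : T.card ≤ 2 * M := by omega
  exact_mod_cast this

end Distortion

section SequentialBound

variable {d : ℕ}

lemma integral_shift_iterate {μ : Measure (FullShift d)} (hμ : μ.map (shift d) = μ) (k : ℕ)
    {g : FullShift d → ℝ} (hg : Measurable g) :
    ∫ x, g ((shift d)^[k] x) ∂μ = ∫ x, g x ∂μ := by
  have hmp : MeasurePreserving (shift d) μ μ := ⟨continuous_shift.measurable, hμ⟩
  have hk := hmp.iterate k
  conv_rhs => rw [← hk.map_eq]
  rw [integral_map hk.measurable.aemeasurable hg.aestronglyMeasurable]

lemma blockEnt_add_le_of_distortion (z : Fin d) {𝒢 S : Set (List (Fin d))} (hU : UniqueRep 𝒢)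
    (hS : S.Nonempty) (hne : ∀ g ∈ S, g ≠ []) {ℓ : ℕ} (hℓ : ∀ g ∈ S, g.length ≤ ℓ)
    {ψ : FullShift d → ℝ} (hψ : Continuous ψ) {K D₀ Q C : ℝ} (hC : 0 ≤ C) (hD₀ : 0 ≤ D₀)
    (hK : ∀ x, |ψ x| ≤ K) (hD : HasDistortion ψ D₀) (hQ : pressure (codedShift S) ψ ≤ Q)
    {μ : Measure (FullShift d)} [IsProbabilityMeasure μ] (hinv : μ.map (shift d) = μ)
    (hμ : μ (Xseq 𝒢) = 1) (n : ℕ) :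
    blockEnt μ n + n * ∫ x, ψ x ∂μ ≤ D₀ + C * (n * μ.real (goodSet 𝒢 S)ᶜ + 2 * ℓ)
      + (3 * D₀ + n * Q
        + n * (Real.exp (3 * D₀) * (d * Real.exp (K + 2 * (2 * D₀) - C)) * Real.exp (-Q))) := by
  classical
  set s : List (Fin d) → ℝ := fun w => birkhoff ψ w.length (fillWord z w) with hs
  have hsw : ∀ w x, window x 0 w.length = w → |birkhoff ψ w.length x - s w| ≤ D₀ :=
    fun w x hx => hD _ _ _ (hx.trans (window_fillWord z w).symm)
  have hsadd : ∀ u v, |s (u ++ v) - s u - s v| ≤ 2 * D₀ := by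
    intro u v
    have h := window_fillWord z (u ++ v)
    rw [List.length_append, window_add] at h
    obtain ⟨h1, h2⟩ := List.append_inj h (by simp)
    rw [← window_shift] at h2
    have e1 := abs_le.1 (hsw u _ h1)
    have e2 := abs_le.1 (hsw v _ h2)
    have e3 : s (u ++ v) = birkhoff ψ u.length (fillWord z (u ++ v)) +
        birkhoff ψ v.length ((shift d)^[u.length] (fillWord z (u ++ v))) := by
      rw [← birkhoff_add, ← List.length_append]
    rw [abs_le]
    constructor <;> linarith [e1.1, e1.2, e2.1, e2.2]
  have hs0 : s [] = 0 := by simp [hs, birkhoff]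
  have hs1 : ∀ a, s [a] ≤ K := fun a => by
    simpa [hs, birkhoff] using (le_abs_self _).trans (hK (fillWord z [a]))
  have hY : ∀ k, concatSum S s k ≤ Real.exp (3 * D₀) * Real.exp (k * Q) := by
    intro k
    refine (concatSum_le z hS hne hD₀ (by positivity) hK hs0
      (fun w x hx => by linarith [(abs_le.1 (hsw w x hx)).1]) hsadd k).trans ?_
    have : D₀ + 2 * D₀ = 3 * D₀ := by ring
    rw [this]
    gcongr
  have hpat := patchedSum_le hsadd hs1 hC (Real.exp_pos (3 * D₀)).le hY n
  set θ := Real.exp (3 * D₀) * (d * Real.exp (K + 2 * (2 * D₀) - C)) * Real.exp (-Q) with hθ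
  have hθ0 : 0 ≤ θ := by positivity
  have hlog : Real.log (patchedSum S s C n) ≤ 3 * D₀ + n * Q + n * θ := by
    have hpos : 0 < patchedSum S s C n :=
      Finset.sum_pos (fun _ _ => Real.exp_pos _) ⟨_, window_mem_words (fun _ => z) 0 n⟩
    rw [Real.log_le_iff_le_exp hpos]
    refine hpat.trans ?_
    rw [Real.exp_add, Real.exp_add, Real.exp_nat_mul θ]
    gcongr
    linarith [Real.add_one_le_exp θ]
  have hent := blockEnt_add_integral_le (μ := μ) n fun w => s w - C * badCount S w
  have hmeas := measurableSet_goodSet hU S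
  set B := (goodSet 𝒢 S)ᶜ with hB
  have hBm : MeasurableSet B := hmeas.compl
  have hBmeas : Measurable (B.indicator (fun _ => (1 : ℝ))) := measurable_const.indicator hBm
  have hiter : ∀ k : ℕ, Measurable (shift d)^[k] := fun k => (continuous_shift.iterate k).measurable
  have hψint : ∀ k : ℕ, Integrable (fun x => ψ ((shift d)^[k] x)) μ := fun k =>
    integrable_of_continuous (hψ.comp (continuous_shift.iterate k))
  have hBint : ∀ k : ℕ, Integrable (fun x => B.indicator (fun _ => (1 : ℝ)) ((shift d)^[k] x)) μ :=
    fun k => Integrable.of_bound (C := 1) (hBmeas.comp (hiter k)).aestronglyMeasurable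
      (Eventually.of_forall fun x => by
        by_cases h : (shift d)^[k] x ∈ B <;> simp [h])
  have hsum1 : Integrable (fun x => ∑ k ∈ Finset.range n, ψ ((shift d)^[k] x)) μ :=
    integrable_finsetSum _ fun k _ => hψint k
  have hsum2 : Integrable (fun x => ∑ k ∈ Finset.range n,
      B.indicator (fun _ => (1 : ℝ)) ((shift d)^[k] x)) μ :=
    integrable_finsetSum _ fun k _ => hBint k
  have hsum3 : Integrable (fun x => C * (∑ k ∈ Finset.range n,
      B.indicator (fun _ => (1 : ℝ)) ((shift d)^[k] x)) + (D₀ + C * (2 * ℓ))) μ :=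
    (hsum2.const_mul C).add (integrable_const _)
  have hlower : n * ∫ x, ψ x ∂μ - D₀ - C * (n * μ.real B + 2 * ℓ) ≤
      ∫ x, (s (window x 0 n) - C * badCount S (window x 0 n)) ∂μ := by
    have e1 : ∫ x, ∑ k ∈ Finset.range n, ψ ((shift d)^[k] x) ∂μ = n * ∫ x, ψ x ∂μ := by
      rw [integral_finsetSum _ fun k _ => hψint k,
        Finset.sum_congr rfl fun k _ => integral_shift_iterate hinv k hψ.measurable]
      simp
    have e2 : ∫ x, ∑ k ∈ Finset.range n, B.indicator (fun _ => (1 : ℝ)) ((shift d)^[k] x) ∂μ =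
        n * μ.real B := by
      rw [integral_finsetSum _ fun k _ => hBint k,
        Finset.sum_congr rfl fun k _ => integral_shift_iterate hinv k hBmeas,
        integral_indicator_const _ hBm]
      simp
    have e3 : ∫ x, ((∑ k ∈ Finset.range n, ψ ((shift d)^[k] x)) -
        (C * (∑ k ∈ Finset.range n, B.indicator (fun _ => (1 : ℝ)) ((shift d)^[k] x))
          + (D₀ + C * (2 * ℓ)))) ∂μ = n * ∫ x, ψ x ∂μ - (C * (n * μ.real B) +
            (D₀ + C * (2 * ℓ))) := by
      rw [integral_sub hsum1 hsum3,
        integral_add (hsum2.const_mul C) (integrable_const _), integral_const_mul, e1, e2]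
      simp
    have e4 : n * ∫ x, ψ x ∂μ - D₀ - C * (n * μ.real B + 2 * ℓ) =
        n * ∫ x, ψ x ∂μ - (C * (n * μ.real B) + (D₀ + C * (2 * ℓ))) := by ring
    rw [e4, ← e3]
    refine integral_mono_ae (hsum1.sub hsum3)
      (integrable_of_continuous (continuous_comp_window n fun w => s w - C * badCount S w)) ?_
    have hae : ∀ᵐ x ∂μ, x ∈ Xseq 𝒢 := (prob_compl_eq_zero_iff (measurableSet_Xseq hU)).2 hμ
    filter_upwards [hae] with x hx
    have hb := badCount_window_le hU hℓ hx n (S := S)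
    have hb' : (badCount S (window x 0 n) : ℝ) ≤
        (∑ k ∈ Finset.range n, B.indicator (fun _ => (1 : ℝ)) ((shift d)^[k] x)) + 2 * ℓ := by
      refine (Nat.cast_le.2 hb).trans (le_of_eq ?_)
      push_cast
      congr 1
      refine Finset.sum_congr rfl fun k _ => ?_
      by_cases h : (shift d)^[k] x ∈ goodSet 𝒢 S <;> simp [hB, h]
    have hx1 := (abs_le.1 (hsw (window x 0 n) x (by rw [length_window]))).2
    rw [length_window] at hx1
    have hx2 := mul_le_mul_of_nonneg_left hb' hC
    rw [birkhoff] at hx1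
    linarith
  have hpatch : Real.log (∑ w ∈ words d n, Real.exp (s w - C * badCount S w)) =
      Real.log (patchedSum S s C n) := rfl
  rw [hpatch] at hent
  linarith

lemma eventually_blockEnt_add_le {G : ℕ → List (Fin d)} (hG : ∀ m, G m ≠ [])
    (hU : UniqueRep (Set.range G)) {ψ : FullShift d → ℝ} (hψ : Continuous ψ) {Q : ℝ}
    (hQ : ∀ m : ℕ, 0 < m → pressure (codedShift (G '' {i | i < m})) ψ ≤ Q)
    {μ : Measure (FullShift d)} [IsProbabilityMeasure μ] (hinv : μ.map (shift d) = μ)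
    (hμ : μ (Xseq (Set.range G)) = 1) {η : ℝ} (hη : 0 < η) :
    ∀ᶠ n : ℕ in atTop, (1 / (n + 1 : ℝ)) * blockEnt μ (n + 1) + ∫ x, ψ x ∂μ ≤ Q + η := by
  obtain ⟨z, -⟩ := List.exists_mem_of_ne_nil _ (hG 0)
  obtain ⟨K, hK0, hK⟩ := exists_bound hψ
  set δ := η / 5 with hδ
  have hδ0 : 0 < δ := by positivity
  obtain ⟨M, hM⟩ := exists_truncate_close z hψ hδ0
  set ψ' : FullShift d → ℝ := fun x => ψ (truncate z M x) with hψ'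
  have hψ'c : Continuous ψ' := hψ.comp (continuous_truncate z M)
  have hK' : ∀ x, |ψ' x| ≤ K := fun x => hK _
  set D₀ : ℝ := 2 * M * (2 * K) with hD₀
  have hD₀0 : 0 ≤ D₀ := by positivity
  have hne : ∀ m, ∀ g ∈ G '' {i | i < m}, g ≠ [] := by
    rintro m _ ⟨i, -, rfl⟩; exact hG i
  have hnonempty : ∀ m, 0 < m → (G '' {i | i < m}).Nonempty := fun m hm => ⟨G 0, 0, hm, rfl⟩
  have hQ' : ∀ m : ℕ, 0 < m → pressure (codedShift (G '' {i | i < m})) ψ' ≤ Q + δ := by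
    intro m hm
    refine (pressure_le_add subset_rfl (Xseq_nonempty (hne m) (hnonempty m hm)).closure
      (fun x hx => shift_mem_codedShift hx) hK' hK fun x _ => ?_).trans
      (add_le_add_left (hQ m hm) δ)
    linarith [(abs_le.1 (hM x)).1]
  obtain ⟨C, hC0, hC⟩ : ∃ C : ℝ, 0 ≤ C ∧ Real.exp (3 * D₀) *
      (d * Real.exp (K + 2 * (2 * D₀) - C)) * Real.exp (-(Q + δ)) ≤ δ := by
    have h1 : Tendsto (fun C : ℝ => Real.exp (3 * D₀) * (d * Real.exp (K + 2 * (2 * D₀))) *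
        Real.exp (-(Q + δ)) * Real.exp (-C)) atTop (𝓝 0) := by
      simpa using Real.tendsto_exp_neg_atTop_nhds_zero.const_mul
        (Real.exp (3 * D₀) * (d * Real.exp (K + 2 * (2 * D₀))) * Real.exp (-(Q + δ)))
    obtain ⟨C, hC, hC0⟩ := ((h1.eventually (gt_mem_nhds hδ0)).and (eventually_ge_atTop 0)).exists
    refine ⟨C, hC0, le_trans (le_of_eq ?_) hC.le⟩
    rw [sub_eq_add_neg, Real.exp_add (K + 2 * (2 * D₀)) (-C)]
    ring
  obtain ⟨m, hm0, hm⟩ : ∃ m : ℕ, 0 < m ∧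
      C * μ.real (goodSet (Set.range G) (G '' {i | i < m}))ᶜ ≤ δ := by
    have h1 := tendsto_measure_iUnion_atTop (μ := μ) (monotone_goodSet (G := G))
    rw [iUnion_goodSet, hμ] at h1
    have h2 : Tendsto (fun m : ℕ => C * μ.real (goodSet (Set.range G) (G '' {i | i < m}))ᶜ) atTop
        (𝓝 0) := by
      have h3 := (ENNReal.tendsto_toReal ENNReal.one_ne_top).comp h1
      have h4 := (h3.const_sub 1).const_mul C
      simp only [ENNReal.toReal_one, sub_self, mul_zero] at h4
      refine h4.congr fun m => ?_
      rw [probReal_compl_eq_one_sub (measurableSet_goodSet hU _)]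
      rfl
    obtain ⟨m, hm, hm0⟩ := ((h2.eventually (gt_mem_nhds hδ0)).and (eventually_gt_atTop 0)).exists
    exact ⟨m, hm0, hm.le⟩
  set S := G '' {i | i < m} with hS
  set ℓ := (Finset.range m).sup fun i => (G i).length with hℓ
  have hℓ' : ∀ g ∈ S, g.length ≤ ℓ := by
    rintro _ ⟨i, hi, rfl⟩
    exact Finset.le_sup (f := fun i => (G i).length) (Finset.mem_range.2 hi)
  have hlim : Tendsto (fun n : ℕ => (4 * D₀ + C * (2 * ℓ)) * (1 / (n + 1 : ℝ))) atTop (𝓝 0) := by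
    simpa using tendsto_one_div_add_atTop_nhds_zero_nat.const_mul (4 * D₀ + C * (2 * ℓ) : ℝ)
  have hψint : ∫ x, ψ x ∂μ ≤ ∫ x, ψ' x ∂μ + δ := by
    have : ∫ x, ψ x ∂μ ≤ ∫ x, (ψ' x + δ) ∂μ :=
      integral_mono (integrable_of_continuous hψ)
        (integrable_of_continuous (hψ'c.add continuous_const))
        fun x => by linarith [(abs_le.1 (hM x)).2]
    rwa [integral_add (integrable_of_continuous hψ'c) (integrable_const _), integral_const,
      probReal_univ, one_smul] at this
  filter_upwards [hlim.eventually (gt_mem_nhds hδ0)] with n hn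
  have hmain := blockEnt_add_le_of_distortion z hU (hnonempty m hm0) (hne m) hℓ' hψ'c hC0 hD₀0 hK'
    (hasDistortion_truncate z M hK0 hK) (hQ' m hm0) hinv hμ (n + 1)
  set θ := Real.exp (3 * D₀) * (d * Real.exp (K + 2 * (2 * D₀) - C)) * Real.exp (-(Q + δ))
  push_cast at hmain
  have hn0 : (0 : ℝ) < n + 1 := by positivity
  have h5 : (1 / (n + 1 : ℝ)) * blockEnt μ (n + 1) + ∫ x, ψ' x ∂μ ≤
      (4 * D₀ + C * (2 * ℓ)) * (1 / (n + 1 : ℝ)) +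
        C * μ.real (goodSet (Set.range G) S)ᶜ + (Q + δ) + θ := by
    have h6 := mul_le_mul_of_nonneg_left hmain (one_div_pos.2 hn0).le
    field_simp at h6 ⊢
    linarith
  linarith

end SequentialBound

section Decomposition

variable {d : ℕ}

open ProbabilityTheory in
lemma map_shift_cond {μ : Measure (FullShift d)} (hμ : μ.map (shift d) = μ)
    {E : Set (FullShift d)} (hE : MeasurableSet E) (hinv : shift d ⁻¹' E = E) :
    (μ[|E]).map (shift d) = μ[|E] := by
  have hmp : MeasurePreserving (shift d) μ μ := ⟨continuous_shift.measurable, hμ⟩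
  have h := (hmp.restrict_preimage hE).map_eq
  rw [hinv] at h
  rw [ProbabilityTheory.cond, Measure.map_smul, h]

open ProbabilityTheory in
lemma real_mul_integral_cond {μ : Measure (FullShift d)} [IsProbabilityMeasure μ]
    {E : Set (FullShift d)} (hE0 : μ E ≠ 0) (ψ : FullShift d → ℝ) :
    μ.real E * ∫ x, ψ x ∂(μ[|E]) = ∫ x in E, ψ x ∂μ := by
  rw [ProbabilityTheory.cond, integral_smul_measure, ENNReal.toReal_inv, smul_eq_mul, ← mul_assoc,
    Measure.real, mul_inv_cancel₀ (ENNReal.toReal_ne_zero.2 ⟨hE0, measure_ne_top _ _⟩), one_mul]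

open ProbabilityTheory in
lemma real_mul_real_cond {μ : Measure (FullShift d)} [IsProbabilityMeasure μ]
    {E : Set (FullShift d)} (hE : MeasurableSet E) (hE0 : μ E ≠ 0) (A : Set (FullShift d)) :
    μ.real E * (μ[|E]).real A = μ.real (A ∩ E) := by
  rw [Measure.real, Measure.real, cond_apply hE, ENNReal.toReal_mul, ENNReal.toReal_inv,
    ← mul_assoc, mul_inv_cancel₀ (ENNReal.toReal_ne_zero.2 ⟨hE0, measure_ne_top _ _⟩), one_mul,
    Set.inter_comm, Measure.real]

lemma ae_mem_of_measure_eq_one {μ : Measure (FullShift d)} [IsProbabilityMeasure μ]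
    {X : Set (FullShift d)} (hX : MeasurableSet X) (h : μ X = 1) : ∀ᵐ x ∂μ, x ∈ X :=
  (prob_compl_eq_zero_iff hX).2 h

lemma freeEnergy_le {X : Set (FullShift d)} {μ : Measure (FullShift d)} (hμ : μ ∈ InvProb X)
    {ψ : FullShift d → ℝ} (hψ : Continuous ψ) {K : ℝ} (hK : ∀ x, |ψ x| ≤ K) :
    freeEnergy μ ψ ≤ Real.log d + K := by
  have := hμ.1
  refine add_le_add (mEnt_le_of_eventually (Eventually.of_forall fun n => blockEnt_div_le n)) ?_
  calc ∫ x, ψ x ∂μ ≤ ∫ _, K ∂μ := integral_mono (integrable_of_continuous hψ)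
        (integrable_const _) fun x => (le_abs_self _).trans (hK x)
    _ = K := by simp

lemma freeEnergy_congr {X : Set (FullShift d)} (hX : MeasurableSet X)
    {μ : Measure (FullShift d)} (hμ : μ ∈ InvProb X) {φ ψ : FullShift d → ℝ}
    (h : ∀ x ∈ X, φ x = ψ x) : freeEnergy μ φ = freeEnergy μ ψ := by
  have := hμ.1
  rw [freeEnergy, freeEnergy, integral_congr_ae
    ((ae_mem_of_measure_eq_one hX hμ.2.2).mono fun x hx => h x hx)]

lemma StrictFSP.congr {X Xs : Set (FullShift d)} (hX : MeasurableSet X) {φ ψ : FullShift d → ℝ}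
    (h : ∀ x ∈ X, φ x = ψ x) (hφ : StrictFSP X Xs φ) : StrictFSP X Xs ψ := by
  have h1 : {r | ∃ μ ∈ InvProb X, μ Xs = 1 ∧ r = freeEnergy μ φ} =
      {r | ∃ μ ∈ InvProb X, μ Xs = 1 ∧ r = freeEnergy μ ψ} := by
    ext r
    exact exists_congr fun μ => and_congr_right fun hμ => by rw [freeEnergy_congr hX hμ h]
  have h2 : {r | ∃ μ ∈ InvProb X, μ (X \ Xs) = 1 ∧ r = freeEnergy μ φ} =
      {r | ∃ μ ∈ InvProb X, μ (X \ Xs) = 1 ∧ r = freeEnergy μ ψ} := by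
    ext r
    exact exists_congr fun μ => and_congr_right fun hμ => by rw [freeEnergy_congr hX hμ h]
  simp only [StrictFSP, PlimOf, PseqOf, h1, h2] at hφ ⊢
  exact hφ

lemma exists_continuous_eqOn {X : Set (FullShift d)} (hX : IsClosed X) {φ : FullShift d → ℝ}
    (hφ : ContinuousOn φ X) : ∃ ψ : FullShift d → ℝ, Continuous ψ ∧ ∀ x ∈ X, φ x = ψ x := by
  obtain ⟨g, hg⟩ := ContinuousMap.exists_restrict_eq hX
    (⟨X.domRestrict φ, continuousOn_iff_continuous_domRestrict.1 hφ⟩ : C(X, ℝ))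
  refine ⟨g, g.continuous, fun x hx => ?_⟩
  have := DFunLike.congr_fun hg ⟨x, hx⟩
  exact this.symm

/-- There is an invariant measure carried by the concatenations of generators. -/
lemma exists_invProb_Xseq {𝒢 : Set (List (Fin d))} (hne : ∀ g ∈ 𝒢, g ≠ []) (h : 𝒢.Nonempty) :
    ∃ μ ∈ InvProb (codedShift 𝒢), μ (Xseq 𝒢) = 1 := by
  obtain ⟨g, hg⟩ := h
  obtain ⟨z, -⟩ := List.exists_mem_of_ne_nil g (hne g hg)
  have hmem := periodicPoint_mem_Xseq hne z (hne g hg) ⟨[g], by simpa using hg, by simp⟩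
  set y := periodicPoint z g with hy
  set Y : Set (FullShift d) := (fun k => (shift d)^[k] y) '' Set.Iio g.length with hY
  have hlen : 0 < g.length := List.length_pos_iff.2 (hne g hg)
  have hYsub : Y ⊆ Xseq 𝒢 := by
    rintro _ ⟨k, -, rfl⟩
    exact (shift_iterate_mem_Xseq k).2 hmem
  have hYinv : ∀ x ∈ Y, shift d x ∈ Y := by
    rintro _ ⟨k, hk, rfl⟩
    dsimp only
    rw [← Function.iterate_succ_apply' (shift d)]
    rcases Nat.lt_or_ge (k + 1) g.length with hk' | hk'
    · exact ⟨k + 1, hk', rfl⟩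
    · have : k + 1 = g.length := le_antisymm hk hk'
      exact ⟨0, hlen, by rw [Nat.succ_eq_add_one, this, hy, shift_iterate_periodicPoint]; rfl⟩
  obtain ⟨μ, ⟨hμ, hinv, hμY⟩, -⟩ := exists_invProb_pressure_le (X := Y) (ψ := fun _ => 0)
    z.pos ⟨y, 0, hlen, rfl⟩ ((Set.finite_Iio _).image _).isClosed hYinv continuous_const
  have hfull : ∀ Z, Y ⊆ Z → μ Z = 1 := fun Z hZ =>
    le_antisymm prob_le_one (hμY ▸ measure_mono hZ)
  exact ⟨μ, ⟨hμ, hinv, hfull _ (hYsub.trans subset_closure)⟩, hfull _ hYsub⟩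

open ProbabilityTheory in
/-- If an invariant measure is not carried by the invariant set `E`, and the part on `E` has
small free energy, then the part off `E` has large free energy. -/
lemma le_freeEnergy_cond_compl {μ : Measure (FullShift d)} [IsProbabilityMeasure μ]
    {E : Set (FullShift d)} (hE : MeasurableSet E) (hE1 : μ Eᶜ ≠ 0) {ψ : FullShift d → ℝ}
    (hψ : Continuous ψ) {P : ℝ}
    (hP : ∀ q : ℕ, 0 < q → q * P ≤ blockEnt μ q + q * ∫ x, ψ x ∂μ)
    (hsmall : μ E ≠ 0 → ∀ᶠ n : ℕ in atTop,
      (1 / (n + 1 : ℝ)) * blockEnt (μ[|E]) (n + 1) + ∫ x, ψ x ∂(μ[|E]) ≤ P) :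
    P ≤ freeEnergy (μ[|Eᶜ]) ψ := by
  have : IsProbabilityMeasure (μ[|Eᶜ]) := cond_isProbabilityMeasure hE1
  set a := μ.real E with ha
  set b := μ.real Eᶜ with hb
  have hb0 : 0 < b := ENNReal.toReal_pos hE1 (measure_ne_top _ _)
  have hab : a + b = 1 := by rw [ha, hb, probReal_compl_eq_one_sub hE]; ring
  obtain ⟨μ₁, hμ₁, hcyl, hgint, hev⟩ : ∃ μ₁ : Measure (FullShift d), IsProbabilityMeasure μ₁ ∧
      (∀ A, MeasurableSet A → μ.real A = a * μ₁.real A + b * (μ[|Eᶜ]).real A) ∧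
      (∫ x, ψ x ∂μ = a * ∫ x, ψ x ∂μ₁ + b * ∫ x, ψ x ∂(μ[|Eᶜ])) ∧
      ∀ᶠ n : ℕ in atTop,
        a * ((1 / (n + 1 : ℝ)) * blockEnt μ₁ (n + 1) + ∫ x, ψ x ∂μ₁) ≤ a * P := by
    have hA : ∀ A, MeasurableSet A → μ.real A = μ.real (A ∩ E) + b * (μ[|Eᶜ]).real A := by
      intro A _
      rw [hb, real_mul_real_cond hE.compl hE1, ← Set.sdiff_eq, measureReal_inter_add_sdiff hE]
    have hI : ∫ x, ψ x ∂μ = ∫ x in E, ψ x ∂μ + b * ∫ x, ψ x ∂(μ[|Eᶜ]) := by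
      rw [hb, real_mul_integral_cond hE1, integral_add_compl hE (integrable_of_continuous hψ)]
    by_cases hE0 : μ E = 0
    · have ha0 : a = 0 := by simp [ha, Measure.real, hE0]
      refine ⟨μ[|Eᶜ], this, fun A hAm => ?_, ?_, by simp [ha0]⟩
      · have : μ.real (A ∩ E) = 0 := by
          simp [Measure.real, measure_mono_null Set.inter_subset_right hE0]
        rw [hA A hAm, ha0, this, zero_mul]
      · rw [hI, ha0, Measure.restrict_zero_set hE0]; simp
    · refine ⟨μ[|E], cond_isProbabilityMeasure hE0, fun A hAm => ?_, ?_, ?_⟩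
      · rw [hA A hAm, ha, real_mul_real_cond hE hE0]
      · rw [hI, ha, real_mul_integral_cond hE0]
      · filter_upwards [hsmall hE0] with n hn
        exact mul_le_mul_of_nonneg_left hn measureReal_nonneg
  set c := Real.negMulLog a + Real.negMulLog b with hc
  have hent := blockEnt_smul_add_smul_le measureReal_nonneg hb0.le
    (fun n w => hcyl (cyl w) (measurableSet_cyl w))
  refine le_of_forall_pos_le_add fun δ hδ => ?_
  rw [freeEnergy, ← sub_le_iff_le_add, ← sub_le_iff_le_add]
  refine le_mEnt_of_eventually ?_
  have hlim : Tendsto (fun n : ℕ => c * (1 / (n + 1 : ℝ))) atTop (𝓝 0) := by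
    simpa using tendsto_one_div_add_atTop_nhds_zero_nat.const_mul c
  filter_upwards [hev, hlim.eventually (gt_mem_nhds (mul_pos hb0 hδ))] with n hn1 hn2
  have h1 := hP (n + 1) n.succ_pos
  have h2 := hent (n + 1)
  have hn0 : (0 : ℝ) < n + 1 := by positivity
  have h3 : P ≤ (1 / (n + 1 : ℝ)) * blockEnt μ (n + 1) + ∫ x, ψ x ∂μ := by
    rw [one_div, ← div_eq_inv_mul, div_add' _ _ _ hn0.ne', le_div_iff₀ hn0]
    push_cast at h1
    linarith
  have h4 := mul_le_mul_of_nonneg_left h2 (one_div_pos.2 hn0).le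
  rw [hgint] at h3
  set H₁ := blockEnt μ₁ (n + 1)
  set H₂ := blockEnt (μ[|Eᶜ]) (n + 1)
  set I₁ := ∫ x, ψ x ∂μ₁
  set I₂ := ∫ x, ψ x ∂(μ[|Eᶜ])
  have h5 : b * P ≤ b * ((1 / (n + 1 : ℝ)) * H₂ + I₂ + δ) := by
    have : b * P = P - a * P := by linear_combination P * hab
    nlinarith
  have h6 := le_of_mul_le_mul_left h5 hb0
  linarith

end Decomposition

section Approximation

variable {d : ℕ} {G : ℕ → List (Fin d)}

lemma image_lt_nonempty {m : ℕ} (hm : 0 < m) : (G '' {i | i < m}).Nonempty := ⟨G 0, 0, hm, rfl⟩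

lemma codedShift_image_nonempty (hG : ∀ m, G m ≠ []) {m : ℕ} (hm : 0 < m) :
    (codedShift (G '' {i | i < m})).Nonempty := by
  refine (Xseq_nonempty ?_ (image_lt_nonempty hm)).closure
  rintro _ ⟨i, -, rfl⟩
  exact hG i

open ProbabilityTheory in
lemma exists_pressure_lt_add (hG : ∀ m, G m ≠ []) (hU : UniqueRep (Set.range G))
    {ψ : FullShift d → ℝ} (hψ : Continuous ψ)
    (hstrict : StrictFSP (codedShift (Set.range G)) (Xseq (Set.range G)) ψ) {ε : ℝ}
    (hε : 0 < ε) : ∃ m : ℕ, 0 < m ∧ pressure (codedShift (Set.range G)) ψ <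
      pressure (codedShift (G '' {i | i < m})) ψ + ε := by
  by_contra! hcon
  set X := codedShift (Set.range G) with hX
  set E := Xseq (Set.range G) with hE
  set P := pressure X ψ with hP
  have hQ : ∀ m : ℕ, 0 < m → pressure (codedShift (G '' {i | i < m})) ψ ≤ P - ε :=
    fun m hm => by linarith [hcon m hm]
  have hne : ∀ g ∈ Set.range G, g ≠ [] := by rintro _ ⟨i, rfl⟩; exact hG i
  obtain ⟨z, -⟩ := List.exists_mem_of_ne_nil _ (hG 0)
  obtain ⟨K, -, hK⟩ := exists_bound hψ
  have hEm : MeasurableSet E := measurableSet_Xseq hU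
  have hXc : IsClosed X := isClosed_closure
  have hseq : PseqOf X E ψ ≤ P - ε := by
    obtain ⟨ν, hν, hνE⟩ := exists_invProb_Xseq hne (Set.range_nonempty G)
    refine csSup_le ⟨_, ν, hν, hνE, rfl⟩ ?_
    rintro _ ⟨μ, ⟨hμ, hinv, -⟩, hμE, rfl⟩
    refine le_of_forall_pos_le_add fun η hη => ?_
    rw [freeEnergy, ← le_sub_iff_add_le]
    refine mEnt_le_of_eventually ?_
    filter_upwards [eventually_blockEnt_add_le hG hU hψ hQ hinv hμE hη] with n hn
    linarith
  obtain ⟨μ, ⟨hμ, hinv, hμX⟩, hμP⟩ := exists_invProb_pressure_le (X := X) z.pos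
    ((Xseq_nonempty hne (Set.range_nonempty G)).closure) hXc
    (fun x hx => shift_mem_codedShift hx) hψ
  by_cases hE1 : μ Eᶜ = 0
  · have hμE : μ E = 1 := (prob_compl_eq_zero_iff hEm).1 hE1
    obtain ⟨n, hn⟩ := (eventually_blockEnt_add_le hG hU hψ hQ hinv hμE (half_pos hε)).exists
    have h1 := hμP (n + 1) n.succ_pos
    have hn0 : (0 : ℝ) < n + 1 := by positivity
    rw [one_div, ← div_eq_inv_mul, div_add' _ _ _ hn0.ne', div_le_iff₀ hn0] at hn
    push_cast at h1
    nlinarith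
  have hlarge : P ≤ freeEnergy (μ[|Eᶜ]) ψ := by
    refine le_freeEnergy_cond_compl hEm hE1 hψ hμP fun hE0 => ?_
    have : IsProbabilityMeasure (μ[|E]) := cond_isProbabilityMeasure hE0
    filter_upwards [eventually_blockEnt_add_le hG hU hψ hQ
      (map_shift_cond hinv hEm preimage_shift_Xseq) (cond_apply_self hE0 (measure_ne_top _ _)) hε]
      with n hn
    linarith
  have hprob : IsProbabilityMeasure (μ[|Eᶜ]) := cond_isProbabilityMeasure hE1
  have hXae : ∀ᵐ x ∂(μ[|Eᶜ]), x ∈ X :=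
    cond_absolutelyContinuous.ae_le (ae_mem_of_measure_eq_one hXc.measurableSet hμX)
  have hEae : ∀ᵐ x ∂(μ[|Eᶜ]), x ∈ Eᶜ :=
    ae_mem_of_measure_eq_one hEm.compl (cond_apply_self hE1 (measure_ne_top _ _))
  have hlim : P ≤ PlimOf X E ψ := by
    refine hlarge.trans (le_csSup ⟨Real.log d + K, ?_⟩ ⟨μ[|Eᶜ], ⟨hprob,
      map_shift_cond hinv hEm.compl ?_, ?_⟩, ?_, rfl⟩)
    · rintro _ ⟨ν, hν, -, rfl⟩
      exact freeEnergy_le hν hψ hK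
    · rw [Set.preimage_compl, preimage_shift_Xseq]
    · exact (prob_compl_eq_zero_iff hXc.measurableSet).1 hXae
    · exact (prob_compl_eq_zero_iff (hXc.measurableSet.diff hEm)).1 (hXae.and hEae)
  have : PlimOf X E ψ < PseqOf X E ψ := hstrict
  linarith

end Approximation

/-- for a coded shift with unique representation and `φ ∈ FSSP(X)`,
the pressure is the limit of the pressures of the finitely generated approximations. -/
theorem statement2 {d : ℕ} (hd : 2 ≤ d) (G : ℕ → List (Fin d)) (hG : ∀ m, G m ≠ [])
    (hU : UniqueRep (Set.range G)) (φ : FullShift d → ℝ)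
    (hφ : ContinuousOn φ (codedShift (Set.range G)))
    (hFSSP : InFSSP (codedShift (Set.range G)) (Xseq (Set.range G)) φ) :
    Tendsto (fun m : ℕ => pressure (codedShift (G '' {i | i < m})) φ) atTop
      (𝓝 (pressure (codedShift (Set.range G)) φ)) := by
  set X := codedShift (Set.range G) with hX
  set Y : ℕ → Set (FullShift d) := fun m => codedShift (G '' {i | i < m}) with hY
  have hXc : IsClosed X := isClosed_closure
  have hXinv : ∀ x ∈ X, shift d x ∈ X := fun x hx => shift_mem_codedShift hx
  have hYinv : ∀ m, ∀ x ∈ Y m, shift d x ∈ Y m := fun m x hx => shift_mem_codedShift hx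
  have hYX : ∀ m, Y m ⊆ X := fun m => codedShift_mono (Set.image_subset_range _ _)
  have hYY : ∀ {m n}, m ≤ n → Y m ⊆ Y n := fun h =>
    codedShift_mono (Set.image_mono fun i hi => lt_of_lt_of_le hi h)
  have hYne : ∀ {m}, 0 < m → (Y m).Nonempty := fun h => codedShift_image_nonempty hG h
  have hXne : X.Nonempty := (hYne one_pos).mono (hYX 1)
  obtain ⟨φ', hφ'c, hφ'⟩ := exists_continuous_eqOn hXc hφ
  have hPY : ∀ m, pressure (Y m) φ = pressure (Y m) φ' := fun m =>
    pressure_congr (hYinv m) fun x hx => hφ' x (hYX m hx)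
  change Tendsto (fun m => pressure (Y m) φ) atTop (𝓝 (pressure X φ))
  simp only [hPY, pressure_congr hXinv hφ']
  obtain ⟨K, -, hK⟩ := exists_bound hφ'c
  rw [Metric.tendsto_atTop]
  intro ε hε
  obtain ⟨ψ₀, hψ₀c, hψ₀φ, hψ₀⟩ := hFSSP (ε / 3) (by positivity)
  obtain ⟨ψ, hψc, hψ⟩ := exists_continuous_eqOn hXc hψ₀c
  obtain ⟨K', -, hK'⟩ := exists_bound hψc
  have hclose : ∀ x ∈ X, |φ' x - ψ x| ≤ ε / 3 := fun x hx => by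
    rw [← hφ' x hx, ← hψ x hx]; exact hψ₀φ x hx
  obtain ⟨m, hm, hlt⟩ := exists_pressure_lt_add hG hU hψc
    (hψ₀.congr hXc.measurableSet hψ) (show 0 < ε / 3 by positivity)
  have hlt' : pressure X ψ < pressure (Y m) ψ + ε / 3 := hlt
  refine ⟨m, fun n hn => ?_⟩
  have h1 : pressure X φ' ≤ pressure X ψ + ε / 3 :=
    pressure_le_add subset_rfl hXne hXinv hK hK' fun x hx => by
      linarith [(abs_le.1 (hclose x hx)).2]
  have h2 : pressure (Y m) ψ ≤ pressure (Y n) φ' + ε / 3 :=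
    pressure_le_add (hYY hn) (hYne hm) (hYinv m) hK' hK fun x hx => by
      linarith [(abs_le.1 (hclose x (hYX m hx))).1]
  have h3 : pressure (Y n) φ' ≤ pressure X φ' + 0 :=
    pressure_le_add (hYX n) (hYne (hm.trans_le hn)) (hYinv n) hK hK fun x _ => by simp
  rw [Real.dist_eq, abs_lt]
  constructor <;> linarith

end PaperStmt
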